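/- Let u, v ∈ BV(X), and let E ⊆ X be a Borel set such that every x ∈ E is a point of density 1 of E and u(x) = v(x) for every x ∈ E. Then V(u − v, E) = 0, and consequently V(u,A) = V(v,A) for every A ⊆ E. -/

import Mathlib

open MeasureTheory Metric Filter Set Topology
open scoped NNReal ENNReal

noncomputable section

universe u

/-- The measure `μ` is doubling with constant `Cd`:
`0 < μ(B(x,2r)) ≤ Cd·μ(B(x,r)) < ∞` for every `x` and every `r > 0`. -/
def IsDoublingWith {X : Type u} [PseudoMetricSpace X] [MeasurableSpace X]
    (μ : Measure X) (Cd : ℝ≥0) : Prop :=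
  ∀ (x : X) (r : ℝ), 0 < r →
    0 < μ (ball x (2 * r)) ∧
      μ (ball x (2 * r)) ≤ (Cd : ℝ≥0∞) * μ (ball x r) ∧
      (Cd : ℝ≥0∞) * μ (ball x r) < ⊤

/-- `X` is a geodesic space: any two points are joined by a unit-speed geodesic. -/
def IsGeodesic (X : Type u) [PseudoMetricSpace X] : Prop :=
  ∀ x y : X, ∃ γ : ℝ → X,
    LipschitzOnWith 1 γ (Icc 0 (dist x y)) ∧ γ 0 = x ∧ γ (dist x y) = y

/-- `g` is an upper gradient of `u`: for every `L ≥ 0` and every `1`-Lipschitz curve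
`γ : [0,L] → X`, `|u(γ 0) − u(γ L)| ≤ ∫₀^L g(γ t) dt`. -/
def IsUpperGradientOf {X : Type u} [PseudoMetricSpace X] (g u : X → ℝ) : Prop :=
  ∀ L : ℝ, 0 ≤ L → ∀ γ : ℝ → X, LipschitzOnWith 1 γ (Icc 0 L) →
    |u (γ 0) - u (γ L)| ≤ ∫ t in (0:ℝ)..L, g (γ t)

/-- The lower pointwise Lipschitz constant
`lip u (x) = liminf_{r→0} r⁻¹ sup_{y ∈ B(x,r)} |u y − u x|`. -/
def lipConst {X : Type u} [PseudoMetricSpace X] (u : X → ℝ) (x : X) : ℝ≥0∞ :=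
  Filter.liminf
    (fun r : ℝ => ⨆ y ∈ ball x r, ENNReal.ofReal (|u y - u x| / r)) (𝓝[>] (0:ℝ))

/-- `u` is locally Lipschitz on `W`: Lipschitz on every closed bounded subset of `W`. -/
def LocallyLipschitzOnSet {X : Type u} [PseudoMetricSpace X] (u : X → ℝ) (W : Set X) : Prop :=
  ∀ K : Set X, IsClosed K → Bornology.IsBounded K → K ⊆ W →
    ∃ L : ℝ≥0, LipschitzOnWith L u K

/-- `u i → f` in `L¹_loc(W)`. -/
def TendstoL1loc {X : Type u} [PseudoMetricSpace X] [MeasurableSpace X]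
    (μ : Measure X) (u : ℕ → X → ℝ) (f : X → ℝ) (W : Set X) : Prop :=
  ∀ K : Set X, IsClosed K → Bornology.IsBounded K → K ⊆ W →
    Tendsto (fun i => ∫⁻ x in K, ENNReal.ofReal |u i x - f x| ∂μ) atTop (𝓝 0)

/-- Total variation `V(f,W)` of `f` on an open set `W`:
the infimum over sequences of locally Lipschitz functions converging to `f` in `L¹_loc(W)`
of the liminf of `∫_W lip u_i dμ`. -/
def totVarOn {X : Type u} [PseudoMetricSpace X] [MeasurableSpace X]
    (μ : Measure X) (f : X → ℝ) (W : Set X) : ℝ≥0∞ :=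
  ⨅ (us : ℕ → X → ℝ) (_ : ∀ i, LocallyLipschitzOnSet (us i) W)
    (_ : TendstoL1loc μ us f W),
    Filter.liminf (fun i => ∫⁻ x in W, lipConst (us i) x ∂μ) atTop

/-- Total variation `V(f,A)` of `f` on an arbitrary set `A`:
infimum of `V(f,W)` over open `W ⊇ A`. -/
def totVarSet {X : Type u} [PseudoMetricSpace X] [MeasurableSpace X]
    (μ : Measure X) (f : X → ℝ) (A : Set X) : ℝ≥0∞ :=
  ⨅ (W : Set X) (_ : IsOpen W) (_ : A ⊆ W), totVarOn μ f W

/-- `f` is of bounded variation: locally integrable and `V(f,X) < ∞`. -/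
def IsBV {X : Type u} [MetricSpace X] [MeasurableSpace X]
    (μ : Measure X) (f : X → ℝ) : Prop :=
  LocallyIntegrable f μ ∧ totVarOn μ f Set.univ < ⊤

/-- `(X,d,μ)` supports a `1`-Poincaré inequality with constant `CP`. -/
def SupportsPoincare {X : Type u} [MetricSpace X] [MeasurableSpace X]
    (μ : Measure X) (CP : ℝ) : Prop :=
  ∀ u : X → ℝ, LocallyLipschitzOnSet u Set.univ →
    ∀ g : X → ℝ, (∀ x, 0 ≤ g x) → Measurable g → IsUpperGradientOf g u →
      ∀ (x : X) (r : ℝ), 0 < r →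
        (⨍ y in ball x r, |u y - (⨍ z in ball x r, u z ∂μ)| ∂μ) ≤
          CP * r * (⨍ y in ball x r, g y ∂μ)

/-- Standing assumptions: a complete geodesic metric measure space with at least two
points, whose measure is doubling and supports a 1-Poincaré inequality. -/
def GoodSpace (X : Type u) [MetricSpace X] [MeasurableSpace X]
    (μ : Measure X) (Cd : ℝ≥0) (CP : ℝ) : Prop :=
  Nontrivial X ∧ CompleteSpace X ∧ IsGeodesic X ∧
    IsDoublingWith μ Cd ∧ SupportsPoincare μ CP

/-- The codimension-1 Hausdorff measure
`𝓗(A) = sup_{δ>0} inf { Σ μ(B_i)/r_i : 0 < r_i ≤ δ, A ⊆ ⋃ B_i }`,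
the infimum over countable coverings of `A` by balls (balls of nonpositive radius
are empty and contribute `0`). -/
def codimOneH {X : Type u} [PseudoMetricSpace X] [MeasurableSpace X]
    (μ : Measure X) (A : Set X) : ℝ≥0∞ :=
  ⨆ (δ : ℝ) (_ : 0 < δ),
    ⨅ (c : ℕ → X) (r : ℕ → ℝ) (_ : ∀ i, r i ≤ δ)
      (_ : A ⊆ ⋃ i, ball (c i) (r i)),
      ∑' i, if 0 < r i then μ (ball (c i) (r i)) / ENNReal.ofReal (r i) else 0

/-- The measure theoretic boundary `∂*E`. -/
def measBdry {X : Type u} [PseudoMetricSpace X] [MeasurableSpace X]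
    (μ : Measure X) (E : Set X) : Set X :=
  {x : X |
    0 < Filter.limsup (fun r : ℝ => μ (E ∩ ball x r) / μ (ball x r)) (𝓝[>] (0:ℝ)) ∧
    0 < Filter.limsup (fun r : ℝ => μ (Eᶜ ∩ ball x r) / μ (ball x r)) (𝓝[>] (0:ℝ))}

/-- `A` has density `0` at `x`. -/
def DensityZeroAt {X : Type u} [PseudoMetricSpace X] [MeasurableSpace X]
    (μ : Measure X) (A : Set X) (x : X) : Prop :=
  Tendsto (fun r : ℝ => μ (A ∩ ball x r) / μ (ball x r)) (𝓝[>] (0:ℝ)) (𝓝 0)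

/-- `A` has density `1` at `x`. -/
def DensityOneAt {X : Type u} [PseudoMetricSpace X] [MeasurableSpace X]
    (μ : Measure X) (A : Set X) (x : X) : Prop :=
  Tendsto (fun r : ℝ => μ (A ∩ ball x r) / μ (ball x r)) (𝓝[>] (0:ℝ)) (𝓝 1)

/-- `x` is a Lebesgue point of `u`. -/
def LebesguePointOf {X : Type u} [MetricSpace X] [MeasurableSpace X]
    (μ : Measure X) (u : X → ℝ) (x : X) : Prop :=
  Tendsto (fun r : ℝ => ⨍ y in ball x r, |u y - u x| ∂μ) (𝓝[>] (0:ℝ)) (𝓝 0)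

/-- `u` is a Borel representative whose value at each Lebesgue point equals the limit
of its ball averages. -/
def PreciseRep {X : Type u} [MetricSpace X] [MeasurableSpace X]
    (μ : Measure X) (u : X → ℝ) : Prop :=
  Measurable u ∧ ∀ (x : X) (c : ℝ),
    Tendsto (fun r : ℝ => ⨍ y in ball x r, u y ∂μ) (𝓝[>] (0:ℝ)) (𝓝 c) → u x = c

/-- The restricted maximal function `M_R ν (x) = sup_{0<r≤R} ν(B(x,r))/μ(B(x,r))`. -/
def restrMaximal {X : Type u} [PseudoMetricSpace X] [MeasurableSpace X]
    (μ ν : Measure X) (R : ℝ) (x : X) : ℝ≥0∞ :=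
  ⨆ (r : ℝ) (_ : 0 < r) (_ : r ≤ R), ν (ball x r) / μ (ball x r)

/-- `F_g(x,y)`: the infimum of `∫_γ g ds` over 1-Lipschitz curves `γ : [0,L] → Z`
joining `x` to `y` (the infimum over the empty set is `∞`). -/
def curveInf {Z : Type u} [PseudoMetricSpace Z] (g : Z → ℝ) (x y : Z) : ℝ≥0∞ :=
  ⨅ (L : ℝ) (_ : 0 ≤ L) (γ : ℝ → Z) (_ : LipschitzOnWith 1 γ (Icc 0 L))
    (_ : γ 0 = x) (_ : γ L = y),
    ∫⁻ t in Icc (0:ℝ) L, ENNReal.ofReal (g (γ t))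

/-- Weak-star convergence of measures: test against continuous, compactly
supported functions. -/
def WeakStar {Z : Type u} [MetricSpace Z] [MeasurableSpace Z]
    (ν : ℕ → Measure Z) (m : Measure Z) : Prop :=
  ∀ φ : Z → ℝ, Continuous φ → HasCompactSupport φ →
    Tendsto (fun n => ∫ x, φ x ∂(ν n)) atTop (𝓝 (∫ x, φ x ∂m))

/-- `φ ∈ BV_c(U)`: a BV function whose support is compact and contained in `U`. -/
def MemBVc {X : Type u} [MetricSpace X] [MeasurableSpace X]
    (μ : Measure X) (φ : X → ℝ) (U : Set X) : Prop :=
  IsBV μ φ ∧ IsCompact (tsupport φ) ∧ tsupport φ ⊆ U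

/-!
Put `w = u - v`, which vanishes on `E`. The Poincaré inequality, applied to approximating
sequences of `u` and `v`, bounds the mean oscillation of `w` on every ball by the mass which a
finite measure `ν` gives to that ball. It suffices to approximate `w` in `L¹_loc` near `E` by
locally Lipschitz functions whose upper slopes have arbitrarily small integrals, because the lower
slope of a sum is at most the lower slope of one term plus the upper slope of the other.

The approximations average `w` over balls of radius comparable to `ρ(x)`, where `ρ` is
`100⁻¹`-Lipschitz and positive exactly on an open set `U ⊇ E`. Let `G ⊆ E` be the points where the
density of `E` is uniformly close to `1` at small scales; it exhausts `E`, so that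
`ν (U \ closure G)` is small for suitable `U` and `G`. Far from `G` the slope is at most a constant
times `ν(B(x, 8ρ)) / μ(B(x, ρ))`, and the integral of this is controlled by `ν (U \ closure G)`.
Near `G` the slope is controlled by averages of `|w| / ρ`. On balls of the much smaller radius `ηρ`,
still `w` vanishes on half of the ball, so the Poincaré inequality bounds the integral of `|w|` by
`ηρ` times the mass of `ν`, and the integral of `|w| / ρ` is at most a constant times `η ν(X)`.
-/

section Doubling

lemma exists_seq_separated_of_not_totallyBounded {X : Type u} [PseudoMetricSpace X] {s : Set X}
    (hs : ¬TotallyBounded s) :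
    ∃ ε > 0, ∃ f : ℕ → X, (∀ n, f n ∈ s) ∧ Pairwise fun m n => ε ≤ dist (f m) (f n) := by
  rw [Metric.totallyBounded_iff] at hs
  push Not at hs
  obtain ⟨ε, hε, hcov⟩ := hs
  have hnext (t : Finset X) : ∃ y, y ∈ s ∧ ∀ z ∈ t, ε ≤ dist z y := by
    obtain ⟨y, hys, hy⟩ := not_subset.1 (hcov t t.finite_toSet)
    refine ⟨y, hys, fun z hz => ?_⟩
    by_contra! h
    exact hy (mem_biUnion hz (mem_ball'.2 h))
  obtain ⟨f, hfs, hsep⟩ := exists_seq_of_forall_finset_exists (fun y => y ∈ s)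
    (fun z y => ε ≤ dist z y) fun t _ => hnext t
  refine ⟨ε, hε, f, hfs, fun m n hmn => ?_⟩
  rcases hmn.lt_or_gt with h | h
  · exact hsep m n h
  · exact dist_comm (f m) (f n) ▸ hsep n m h

variable {X : Type u} [PseudoMetricSpace X] [MeasurableSpace X] {μ : Measure X} {Cd : ℝ≥0}

namespace IsDoublingWith

lemma measure_ball_pos (hd : IsDoublingWith μ Cd) (x : X) {r : ℝ} (hr : 0 < r) :
    0 < μ (ball x r) := by
  simpa only [mul_div_cancel₀ r (two_ne_zero' ℝ)] using (hd x (r / 2) (half_pos hr)).1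

lemma constant_ne_zero (hd : IsDoublingWith μ Cd) (x : X) : Cd ≠ 0 := by
  rintro rfl
  have h := hd x 1 one_pos
  simpa using h.1.trans_le h.2.1

lemma constant_pow_ne_zero (hd : IsDoublingWith μ Cd) (x : X) (k : ℕ) :
    (Cd : ℝ≥0∞) ^ k ≠ 0 :=
  pow_ne_zero k (ENNReal.coe_ne_zero.2 (hd.constant_ne_zero x))

lemma measure_ball_ne_top (hd : IsDoublingWith μ Cd) (x : X) (r : ℝ) : μ (ball x r) ≠ ∞ := by
  rcases le_or_gt r 0 with hr | hr
  · simp [ball_eq_empty.2 hr]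
  · intro h
    have hlt := (hd x r hr).2.2
    rw [h, ENNReal.mul_top (ENNReal.coe_ne_zero.2 (hd.constant_ne_zero x))] at hlt
    exact lt_irrefl _ hlt

lemma measure_ball_two_pow_mul_le (hd : IsDoublingWith μ Cd) (x : X) {r : ℝ} (hr : 0 < r)
    (k : ℕ) : μ (ball x (2 ^ k * r)) ≤ (Cd : ℝ≥0∞) ^ k * μ (ball x r) := by
  induction k with
  | zero => simp
  | succ k ih =>
    calc μ (ball x (2 ^ (k + 1) * r)) = μ (ball x (2 * (2 ^ k * r))) := by ring_nf
      _ ≤ Cd * μ (ball x (2 ^ k * r)) := (hd x (2 ^ k * r) (by positivity)).2.1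
      _ ≤ Cd * ((Cd : ℝ≥0∞) ^ k * μ (ball x r)) := by gcongr
      _ = (Cd : ℝ≥0∞) ^ (k + 1) * μ (ball x r) := by ring

lemma measure_ball_le (hd : IsDoublingWith μ Cd) {x y : X} {R r : ℝ} (k : ℕ) (hr : 0 < r)
    (h : dist x y + R ≤ 2 ^ k * r) : μ (ball x R) ≤ (Cd : ℝ≥0∞) ^ k * μ (ball y r) :=
  (measure_mono (ball_subset_ball' (by linarith))).trans (hd.measure_ball_two_pow_mul_le y hr k)

lemma inv_measure_ball_le (hd : IsDoublingWith μ Cd) {x y : X} {R r : ℝ} (k : ℕ) (hr : 0 < r)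
    (h : dist x y + R ≤ 2 ^ k * r) :
    (μ (ball y r))⁻¹ ≤ (Cd : ℝ≥0∞) ^ k * (μ (ball x R))⁻¹ := by
  have hne := hd.constant_pow_ne_zero y k
  have hne' : (Cd : ℝ≥0∞) ^ k ≠ ∞ := ENNReal.pow_ne_top ENNReal.coe_ne_top
  calc (μ (ball y r))⁻¹ = (Cd : ℝ≥0∞) ^ k * ((Cd : ℝ≥0∞) ^ k * μ (ball y r))⁻¹ := by
        rw [ENNReal.mul_inv (.inl hne) (.inl hne'), ← mul_assoc,
          ENNReal.mul_inv_cancel hne hne', one_mul]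
    _ ≤ (Cd : ℝ≥0∞) ^ k * (μ (ball x R))⁻¹ := by gcongr; exact hd.measure_ball_le k hr h

lemma isLocallyFiniteMeasure (hd : IsDoublingWith μ Cd) : IsLocallyFiniteMeasure μ :=
  ⟨fun x => ⟨ball x 1, ball_mem_nhds x one_pos, (hd.measure_ball_ne_top x 1).lt_top⟩⟩

lemma exists_pos_le_measure_ball (hd : IsDoublingWith μ Cd) (x : X) (R : ℝ) {ε : ℝ}
    (hε : 0 < ε) : ∃ c > 0, ∀ y ∈ closedBall x R, c ≤ μ (ball y ε) := by
  obtain ⟨k, hk⟩ := pow_unbounded_of_one_lt ((R + 1) / ε) one_lt_two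
  rw [div_lt_iff₀ hε] at hk
  refine ⟨μ (ball x 1) / (Cd : ℝ≥0∞) ^ k, ENNReal.div_pos (hd.measure_ball_pos x one_pos).ne'
    (ENNReal.pow_ne_top ENNReal.coe_ne_top), fun y hy => ENNReal.div_le_of_le_mul' ?_⟩
  exact hd.measure_ball_le k hε (by linarith [mem_closedBall'.1 hy])

lemma totallyBounded_closedBall [OpensMeasurableSpace X] (hd : IsDoublingWith μ Cd) (x : X)
    (R : ℝ) : TotallyBounded (closedBall x R) := by
  by_contra h
  obtain ⟨ε, hε, f, hfR, hsep⟩ := exists_seq_separated_of_not_totallyBounded h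
  obtain ⟨c, hc, hcf⟩ := hd.exists_pos_le_measure_ball x R (half_pos hε)
  have hdisj : Pairwise (Function.onFun Disjoint fun n => ball (f n) (ε / 2)) := fun m n hmn =>
    ball_disjoint_ball ((add_halves ε).le.trans (hsep hmn))
  have hfin : μ (⋃ n, ball (f n) (ε / 2)) ≠ ∞ := by
    refine measure_ne_top_of_subset (iUnion_subset fun n => ball_subset_ball' ?_)
      (hd.measure_ball_ne_top x (ε / 2 + R))
    linarith [mem_closedBall.1 (hfR n)]
  refine infinite_univ (α := ℕ) ((Measure.finite_const_le_meas_of_disjoint_iUnion μ hc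
    (fun n => measurableSet_ball) hdisj hfin).subset fun n _ => hcf (f n) (hfR n))

lemma properSpace [OpensMeasurableSpace X] [CompleteSpace X] (hd : IsDoublingWith μ Cd) :
    ProperSpace X :=
  ⟨fun x r => isCompact_iff_totallyBounded_isComplete.2
    ⟨hd.totallyBounded_closedBall x r, isClosed_closedBall.isComplete⟩⟩

end IsDoublingWith

end Doubling

/-- A scale is a radius function that varies slowly. The Lipschitz constant `1/100` makes the
values of `σ` comparable on any ball whose radius is a moderate multiple of `σ` at its centre. -/
def IsScale {X : Type u} [PseudoMetricSpace X] (σ : X → ℝ) : Prop := LipschitzWith 100⁻¹ σ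

section VariableScale

variable {X : Type u} [PseudoMetricSpace X] {σ : X → ℝ}

lemma IsScale.abs_sub_le (hσ : IsScale σ) (x y : X) : |σ x - σ y| ≤ dist x y / 100 := by
  simpa [Real.dist_eq, div_eq_inv_mul] using LipschitzWith.dist_le_mul hσ x y

lemma IsScale.continuous (hσ : IsScale σ) : Continuous σ := LipschitzWith.continuous hσ

lemma IsScale.const_mul (hσ : IsScale σ) {a : ℝ} (ha : 0 ≤ a) (ha1 : a ≤ 1) :
    IsScale fun x => a * σ x := by
  refine LipschitzWith.of_dist_le_mul fun x y => ?_
  calc dist (a * σ x) (a * σ y) = a * dist (σ x) (σ y) := by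
        rw [Real.dist_eq, Real.dist_eq, ← mul_sub, abs_mul, abs_of_nonneg ha]
    _ ≤ 1 * dist (σ x) (σ y) := by gcongr
    _ ≤ (100⁻¹ : ℝ≥0) * dist x y := by rw [one_mul]; exact LipschitzWith.dist_le_mul hσ x y

variable [MeasurableSpace X]

lemma measurableSet_dist_lt_scale [OpensMeasurableSpace X] [SecondCountableTopology X]
    (hσ : Continuous σ) : MeasurableSet {p : X × X | dist p.2 p.1 < σ p.1} :=
  (isOpen_lt (by fun_prop) (by fun_prop)).measurableSet

lemma measurableSet_mem_ball_scale [OpensMeasurableSpace X] (hσ : Continuous σ) (y : X) :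
    MeasurableSet {x | y ∈ ball x (σ x)} :=
  (isOpen_lt (continuous_const.dist continuous_id) hσ).measurableSet

lemma measurable_measure_ball_scale [OpensMeasurableSpace X] [SecondCountableTopology X]
    (ν : Measure X) [SFinite ν] (hσ : Continuous σ) : Measurable fun x => ν (ball x (σ x)) :=
  measurable_measure_prodMk_left (measurableSet_dist_lt_scale hσ)

lemma lintegral_mul_measure_ball_scale [OpensMeasurableSpace X] [SecondCountableTopology X]
    (μ ν : Measure X) [SFinite μ] [SFinite ν] (hσ : Continuous σ) {g : X → ℝ≥0∞}
    (hg : Measurable g) :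
    ∫⁻ x, g x * ν (ball x (σ x)) ∂μ = ∫⁻ y, ∫⁻ x in {x | y ∈ ball x (σ x)}, g x ∂μ ∂ν := by
  have hm := measurableSet_dist_lt_scale hσ
  calc ∫⁻ x, g x * ν (ball x (σ x)) ∂μ
      = ∫⁻ x, ∫⁻ y, {p : X × X | dist p.2 p.1 < σ p.1}.indicator (fun p => g p.1) (x, y) ∂ν ∂μ := by
        refine lintegral_congr fun x => ?_
        rw [← setLIntegral_const, ← lintegral_indicator measurableSet_ball]
        rfl
    _ = ∫⁻ y, ∫⁻ x, {p : X × X | dist p.2 p.1 < σ p.1}.indicator (fun p => g p.1) (x, y) ∂μ ∂ν :=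
        lintegral_lintegral_swap ((hg.comp measurable_fst).indicator hm).aemeasurable
    _ = ∫⁻ y, ∫⁻ x in {x | y ∈ ball x (σ x)}, g x ∂μ ∂ν := by
        refine lintegral_congr fun y => ?_
        rw [← lintegral_indicator (measurableSet_mem_ball_scale hσ y)]
        rfl

variable {μ : Measure X} {Cd : ℝ≥0}

/- For `y ∈ ball x (8σ(x))` one has `σ(x) ≈ σ(y)`, so the integral is the average of a bounded
function over `ball y (9σ(y))`. -/
lemma IsDoublingWith.setLIntegral_inv_measure_ball_le
    (hd : IsDoublingWith μ Cd) (hσ : IsScale σ) {A : Set X} (hpos : ∀ x ∈ A, 0 < σ x) (y : X) :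
    ∫⁻ x in {x | y ∈ ball x (8 * σ x)} ∩ A, (μ (ball x (σ x)))⁻¹ ∂μ ≤ (Cd : ℝ≥0∞) ^ 5 := by
  rcases ({x | y ∈ ball x (8 * σ x)} ∩ A).eq_empty_or_nonempty with hT | ⟨x₀, hx₀, hx₀A⟩
  · simp only [hT, Measure.restrict_empty, lintegral_zero_measure, zero_le]
  have hσy : 0 < σ y := by
    linarith [hpos x₀ hx₀A, mem_ball.1 hx₀, (abs_le.1 (hσ.abs_sub_le y x₀)).1]
  have hsub : {x | y ∈ ball x (8 * σ x)} ∩ A ⊆ ball y (9 * σ y) := fun x ⟨hx, _⟩ =>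
    mem_ball'.2 (by linarith [mem_ball.1 hx, (abs_le.1 (hσ.abs_sub_le y x)).1])
  have hle : ∀ x ∈ {x | y ∈ ball x (8 * σ x)} ∩ A,
      (μ (ball x (σ x)))⁻¹ ≤ (Cd : ℝ≥0∞) ^ 5 * (μ (ball y (9 * σ y)))⁻¹ := fun x ⟨hx, hxA⟩ =>
    hd.inv_measure_ball_le 5 (hpos x hxA)
      (by linarith [hpos x hxA, mem_ball.1 hx, (abs_le.1 (hσ.abs_sub_le y x)).2])
  calc ∫⁻ x in {x | y ∈ ball x (8 * σ x)} ∩ A, (μ (ball x (σ x)))⁻¹ ∂μ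
      ≤ ∫⁻ _ in {x | y ∈ ball x (8 * σ x)} ∩ A, (Cd : ℝ≥0∞) ^ 5 * (μ (ball y (9 * σ y)))⁻¹ ∂μ :=
        setLIntegral_mono measurable_const hle
    _ ≤ ∫⁻ _ in ball y (9 * σ y), (Cd : ℝ≥0∞) ^ 5 * (μ (ball y (9 * σ y)))⁻¹ ∂μ :=
        lintegral_mono_set hsub
    _ = (Cd : ℝ≥0∞) ^ 5 := by
        rw [setLIntegral_const, mul_assoc, ENNReal.inv_mul_cancel
          (hd.measure_ball_pos y (by positivity)).ne' (hd.measure_ball_ne_top y _), mul_one]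

lemma IsDoublingWith.one_le_setLIntegral_inv_measure_ball [OpensMeasurableSpace X]
    (hd : IsDoublingWith μ Cd) (hσ : IsScale σ) {S : Set X} {y : X} (hy : 0 < σ y)
    (hS : ball y (σ y) ⊆ S) :
    1 ≤ (Cd : ℝ≥0∞) ^ 2 *
      ∫⁻ x in {x | y ∈ ball x (2 * σ x)} ∩ S, (μ (ball x (σ x)))⁻¹ ∂μ := by
  have hsub : ball y (σ y) ⊆ {x | y ∈ ball x (2 * σ x)} ∩ S := fun x hx =>
    ⟨mem_ball'.2 (by linarith [mem_ball.1 hx, (abs_le.1 (hσ.abs_sub_le x y)).1]), hS hx⟩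
  have hle : ∀ x ∈ ball y (σ y),
      (μ (ball y (σ y)))⁻¹ ≤ (Cd : ℝ≥0∞) ^ 2 * (μ (ball x (σ x)))⁻¹ := fun x hx =>
    hd.inv_measure_ball_le 2 hy
      (by linarith [mem_ball.1 hx, (abs_le.1 (hσ.abs_sub_le x y)).2])
  calc 1 = ∫⁻ _ in ball y (σ y), (μ (ball y (σ y)))⁻¹ ∂μ := by
        rw [setLIntegral_const, ENNReal.inv_mul_cancel (hd.measure_ball_pos y hy).ne'
          (hd.measure_ball_ne_top y _)]
    _ ≤ ∫⁻ x in ball y (σ y), (Cd : ℝ≥0∞) ^ 2 * (μ (ball x (σ x)))⁻¹ ∂μ :=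
        setLIntegral_mono' measurableSet_ball hle
    _ ≤ ∫⁻ x in {x | y ∈ ball x (2 * σ x)} ∩ S, (Cd : ℝ≥0∞) ^ 2 * (μ (ball x (σ x)))⁻¹ ∂μ :=
        lintegral_mono_set hsub
    _ = (Cd : ℝ≥0∞) ^ 2 *
          ∫⁻ x in {x | y ∈ ball x (2 * σ x)} ∩ S, (μ (ball x (σ x)))⁻¹ ∂μ :=
        lintegral_const_mul' _ _ (ENNReal.pow_ne_top ENNReal.coe_ne_top)

lemma setLIntegral_measure_ball_div [OpensMeasurableSpace X] [SecondCountableTopology X]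
    [SFinite μ] (hσ : Continuous σ) (ν : Measure X) [SFinite ν] (a : ℝ) (A : Set X) :
    ∫⁻ x in A, ν (ball x (a * σ x)) / μ (ball x (σ x)) ∂μ =
      ∫⁻ y, ∫⁻ x in {x | y ∈ ball x (a * σ x)} ∩ A, (μ (ball x (σ x)))⁻¹ ∂μ ∂ν := by
  simp only [div_eq_mul_inv, mul_comm (ν _),
    ← Measure.restrict_restrict (measurableSet_mem_ball_scale (hσ.const_mul a) _)]
  exact lintegral_mul_measure_ball_scale (μ.restrict A) ν (hσ.const_mul a)
    (measurable_measure_ball_scale μ hσ).inv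

lemma IsDoublingWith.setLIntegral_measure_ball_div_le [OpensMeasurableSpace X]
    [SecondCountableTopology X] [SFinite μ] (hd : IsDoublingWith μ Cd) (hσ : IsScale σ)
    (ν : Measure X) [SFinite ν] {A S : Set X} (hpos : ∀ x ∈ A, 0 < σ x) (hS : MeasurableSet S)
    (hAS : ∀ x ∈ A, ball x (8 * σ x) ⊆ S) :
    ∫⁻ x in A, ν (ball x (8 * σ x)) / μ (ball x (σ x)) ∂μ ≤ (Cd : ℝ≥0∞) ^ 5 * ν S := by
  rw [setLIntegral_measure_ball_div hσ.continuous, ← setLIntegral_const,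
    ← lintegral_indicator hS]
  refine lintegral_mono fun y => ?_
  by_cases hy : y ∈ S
  · rw [indicator_of_mem hy]
    exact hd.setLIntegral_inv_measure_ball_le hσ hpos y
  · have hempty : {x | y ∈ ball x (8 * σ x)} ∩ A = ∅ :=
      eq_empty_of_forall_notMem fun x ⟨hx, hxA⟩ => hy (hAS x hxA hx)
    simp only [hempty, Measure.restrict_empty, lintegral_zero_measure, zero_le]

lemma IsDoublingWith.measure_le_setLIntegral_measure_ball_div [OpensMeasurableSpace X]
    [SecondCountableTopology X] [SFinite μ] (hd : IsDoublingWith μ Cd) (hσ : IsScale σ)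
    (ν : Measure X) [SFinite ν] {A S : Set X} (hA : MeasurableSet A)
    (hpos : ∀ y ∈ A, 0 < σ y) (hAS : ∀ y ∈ A, ball y (σ y) ⊆ S) :
    ν A ≤ (Cd : ℝ≥0∞) ^ 2 * ∫⁻ x in S, ν (ball x (2 * σ x)) / μ (ball x (σ x)) ∂μ := by
  rw [setLIntegral_measure_ball_div hσ.continuous,
    ← lintegral_const_mul' _ _ (ENNReal.pow_ne_top ENNReal.coe_ne_top)]
  calc ν A = ∫⁻ _ in A, 1 ∂ν := setLIntegral_one A |>.symm
    _ ≤ ∫⁻ y in A, (Cd : ℝ≥0∞) ^ 2 *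
          ∫⁻ x in {x | y ∈ ball x (2 * σ x)} ∩ S, (μ (ball x (σ x)))⁻¹ ∂μ ∂ν :=
        setLIntegral_mono' hA fun y hy =>
          hd.one_le_setLIntegral_inv_measure_ball hσ (hpos y hy) (hAS y hy)
    _ ≤ _ := setLIntegral_le_lintegral _ _

end VariableScale

section LipschitzConstants

lemma liminf_add_le_liminf_add_limsup {ι : Type*} {F : Filter ι} (u v : ι → ℝ≥0∞) :
    liminf (fun i => u i + v i) F ≤ liminf u F + limsup v F := by
  refine ENNReal.le_of_forall_pos_le_add fun ε hε hfin => ?_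
  obtain ⟨hu, hv⟩ := ENNReal.add_lt_top.1 hfin
  have hε2 : (ε / 2 : ℝ≥0∞) ≠ 0 := by simpa using hε.ne'
  have hlow : ∃ᶠ i in F, u i < liminf u F + ε / 2 :=
    frequently_lt_of_liminf_lt (by isBoundedDefault) (ENNReal.lt_add_right hu.ne hε2)
  have hup : ∀ᶠ i in F, v i < limsup v F + ε / 2 :=
    eventually_lt_of_limsup_lt (ENNReal.lt_add_right hv.ne hε2)
  refine liminf_le_of_frequently_le' ((hlow.and_eventually hup).mono fun i hi => ?_)
  calc u i + v i ≤ (liminf u F + ε / 2) + (limsup v F + ε / 2) := add_le_add hi.1.le hi.2.le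
    _ = liminf u F + limsup v F + ε := by rw [add_add_add_comm, ENNReal.add_halves]

/-- The difference quotient `r⁻¹ sup_{y ∈ B(x,r)} |u y - u x|` of which `lipConst u x` is the
lower limit as `r → 0`. -/
def oscQuot {X : Type u} [PseudoMetricSpace X] (u : X → ℝ) (r : ℝ) (x : X) : ℝ≥0∞ :=
  ⨆ y ∈ ball x r, ENNReal.ofReal (|u y - u x| / r)

/-- The upper pointwise Lipschitz constant
`Lip u (x) = limsup_{r→0} r⁻¹ sup_{y ∈ B(x,r)} |u y − u x|`. -/
def upperLip {X : Type u} [PseudoMetricSpace X] (u : X → ℝ) (x : X) : ℝ≥0∞ :=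
  limsup (fun r : ℝ => oscQuot u r x) (𝓝[>] (0 : ℝ))

variable {X : Type u} [PseudoMetricSpace X] {u : X → ℝ} {x : X}

lemma ofReal_abs_sub_div_le_oscQuot {y : X} {r : ℝ} (hy : y ∈ ball x r) :
    ENNReal.ofReal (|u y - u x| / r) ≤ oscQuot u r x :=
  le_iSup₂_of_le (f := fun y (_ : y ∈ ball x r) => ENNReal.ofReal (|u y - u x| / r)) y hy le_rfl

lemma oscQuot_le_mul_oscQuot {r s : ℝ} (hr : 0 < r) (hrs : r ≤ s) :
    oscQuot u r x ≤ ENNReal.ofReal (s / r) * oscQuot u s x := by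
  have hs : 0 < s := hr.trans_le hrs
  refine iSup₂_le fun y hy => ?_
  calc ENNReal.ofReal (|u y - u x| / r)
      = ENNReal.ofReal (s / r) * ENNReal.ofReal (|u y - u x| / s) := by
        rw [← ENNReal.ofReal_mul (by positivity)]
        congr 1
        field_simp
    _ ≤ ENNReal.ofReal (s / r) * oscQuot u s x := by
        gcongr
        exact ofReal_abs_sub_div_le_oscQuot (ball_subset_ball hrs hy)

lemma oscQuot_le {r : ℝ} {F : ℝ≥0∞} (hr : 0 < r)
    (h : ∀ y ∈ ball x r, ‖u y - u x‖ₑ ≤ F * edist y x) : oscQuot u r x ≤ F := by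
  refine iSup₂_le fun y hy => ?_
  rw [ENNReal.ofReal_div_of_pos hr, ← Real.enorm_eq_ofReal_abs]
  refine ENNReal.div_le_of_le_mul ((h y hy).trans ?_)
  gcongr
  rw [edist_dist]
  exact ENNReal.ofReal_le_ofReal (mem_ball.1 hy).le

lemma upperLip_le {F : ℝ≥0∞} (h : ∀ᶠ y in 𝓝 x, ‖u y - u x‖ₑ ≤ F * edist y x) :
    upperLip u x ≤ F := by
  obtain ⟨ε, hε, hball⟩ := Metric.eventually_nhds_iff_ball.1 h
  refine limsup_le_of_le (h := ?_)
  filter_upwards [Ioo_mem_nhdsGT hε] with r hr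
  exact oscQuot_le hr.1 fun y hy => hball y (ball_subset_ball hr.2.le hy)

lemma lipConst_le_upperLip (u : X → ℝ) (x : X) : lipConst u x ≤ upperLip u x :=
  liminf_le_limsup

lemma lipConst_le_of_lipschitzOnWith {L : ℝ≥0} {s : Set X} (h : LipschitzOnWith L u s)
    (hs : s ∈ 𝓝 x) : lipConst u x ≤ L := by
  refine (lipConst_le_upperLip u x).trans (upperLip_le ?_)
  filter_upwards [hs] with y hy
  rw [← edist_eq_enorm_sub]
  exact h hy (mem_of_mem_nhds hs)

lemma oscQuot_add_le (u v : X → ℝ) (r : ℝ) (x : X) :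
    oscQuot (fun y => u y + v y) r x ≤ oscQuot u r x + oscQuot v r x := by
  refine iSup₂_le fun y hy => ?_
  have hr : 0 ≤ r := nonempty_ball.1 ⟨y, hy⟩ |>.le
  calc ENNReal.ofReal (|u y + v y - (u x + v x)| / r)
      ≤ ENNReal.ofReal (|u y - u x| / r + |v y - v x| / r) := by
        rw [← add_div, add_sub_add_comm]
        gcongr
        exact abs_add_le _ _
    _ = ENNReal.ofReal (|u y - u x| / r) + ENNReal.ofReal (|v y - v x| / r) :=
        ENNReal.ofReal_add (by positivity) (by positivity)
    _ ≤ oscQuot u r x + oscQuot v r x :=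
        add_le_add (ofReal_abs_sub_div_le_oscQuot hy) (ofReal_abs_sub_div_le_oscQuot hy)

lemma lipConst_add_le (u v : X → ℝ) (x : X) :
    lipConst (fun y => u y + v y) x ≤ lipConst u x + upperLip v x :=
  (liminf_le_liminf (Eventually.of_forall fun r => oscQuot_add_le u v r x)).trans
    (liminf_add_le_liminf_add_limsup _ _)

section Measurability

lemma lowerSemicontinuousOn_oscQuot {W : Set X} (hu : ContinuousOn u W) (r : ℝ) :
    LowerSemicontinuousOn (oscQuot u r) W := by
  intro x hx a ha
  simp only [oscQuot, lt_iSup_iff] at ha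
  obtain ⟨y, hy, hya⟩ := ha
  have hcont : ContinuousWithinAt (fun z => ENNReal.ofReal (|u y - u z| / r)) W x :=
    ENNReal.continuous_ofReal.continuousAt.comp_continuousWithinAt
      ((continuousWithinAt_const.sub (hu x hx)).abs.div_const r)
  have hmem : ∀ᶠ z in 𝓝[W] x, y ∈ ball z r :=
    (continuous_const.dist continuous_id).continuousWithinAt.eventually_lt_const hy
  filter_upwards [hcont.eventually_const_lt hya, hmem] with z hz hyz
  exact hz.trans_le (ofReal_abs_sub_div_le_oscQuot hyz)

/- Shrinking the radius from `r` to a rational `q < r` changes `oscQuot` by a factor of at most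
`r / q`, which is as close to `1` as we please. -/
lemma lipConst_eq_liminf_rat (u : X → ℝ) (x : X) :
    lipConst u x =
      liminf (fun q : ℚ => oscQuot u q x) (comap ((↑) : ℚ → ℝ) (𝓝[>] (0 : ℝ))) := by
  refine le_antisymm ?_ (le_of_forall_lt_imp_le_of_dense fun c hc => ?_)
  · exact (liminf_le_liminf_of_le map_comap_le).trans_eq (liminf_comp _ _ _).symm
  obtain ⟨ε, hε, hcε⟩ := mem_nhdsGT_iff_exists_Ioo_subset.1
    (eventually_comap.1 (eventually_lt_of_lt_liminf hc))
  suffices h : ∀ᶠ r in 𝓝[>] (0 : ℝ), c ≤ oscQuot u r x from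
    le_liminf_of_le (by isBoundedDefault) h
  filter_upwards [Ioo_mem_nhdsGT hε] with r hr
  obtain ⟨q, -, hqr, hq⟩ := Real.exists_seq_rat_strictMono_tendsto r
  have hlim : Tendsto (fun n => ENNReal.ofReal (r / q n) * oscQuot u r x) atTop
      (𝓝 (ENNReal.ofReal (r / r) * oscQuot u r x)) :=
    ENNReal.Tendsto.mul_const
      (ENNReal.tendsto_ofReal (tendsto_const_nhds.div hq hr.1.ne')) (.inl (by simp [hr.1.ne']))
  rw [div_self hr.1.ne', ENNReal.ofReal_one, one_mul] at hlim
  refine ge_of_tendsto hlim ?_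
  filter_upwards [hq.eventually_const_lt hr.1] with n hn
  exact (hcε ⟨hn, (hqr n).trans hr.2⟩ _ rfl).le.trans (oscQuot_le_mul_oscQuot hn (hqr n).le)

variable [MeasurableSpace X] [OpensMeasurableSpace X]

lemma measurable_lipConst (hu : Continuous u) : Measurable (lipConst u) := by
  obtain ⟨s, hs⟩ := (comap ((↑) : ℚ → ℝ) (𝓝[>] (0 : ℝ))).exists_antitone_basis
  rw [funext (lipConst_eq_liminf_rat u)]
  refine Measurable.liminf' (fun q => ?_) ⟨hs.1, to_countable _⟩ fun n => to_countable _
  exact (lowerSemicontinuousOn_univ_iff.1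
    (lowerSemicontinuousOn_oscQuot hu.continuousOn q)).measurable

lemma aemeasurable_upperLip (μ : Measure X) {W : Set X} (hW : MeasurableSet W)
    (hu : ContinuousOn u W) : AEMeasurable (upperLip u) (μ.restrict W) := by
  obtain ⟨s, hs⟩ := (𝓝[>] (0 : ℝ)).exists_antitone_basis
  have hlsc (n : ℕ) : LowerSemicontinuousOn (fun x => ⨆ r ∈ s n, oscQuot u r x) W :=
    lowerSemicontinuousOn_biSup fun r _ => lowerSemicontinuousOn_oscQuot hu r
  refine aemeasurable_restrict_of_measurable_subtype hW ?_
  simp only [upperLip, hs.1.limsup_eq_iInf_iSup, iInf_true]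
  exact Measurable.iInf fun n => (lowerSemicontinuous_restrict_iff.2 (hlsc n)).measurable

end Measurability

namespace LocallyLipschitzOnSet

lemma mono {V W : Set X} (hu : LocallyLipschitzOnSet u W) (hVW : V ⊆ W) :
    LocallyLipschitzOnSet u V :=
  fun K hK hKb hKV => hu K hK hKb (hKV.trans hVW)

lemma add {v : X → ℝ} {W : Set X} (hu : LocallyLipschitzOnSet u W)
    (hv : LocallyLipschitzOnSet v W) : LocallyLipschitzOnSet (fun x => u x + v x) W := by
  intro K hK hKb hKW
  obtain ⟨L, hL⟩ := hu K hK hKb hKW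
  obtain ⟨M, hM⟩ := hv K hK hKb hKW
  exact ⟨L + M, hL.add hM⟩

lemma continuousOn {W : Set X} (hu : LocallyLipschitzOnSet u W) (hW : IsOpen W) :
    ContinuousOn u W := by
  intro x hx
  obtain ⟨r, hr, hball⟩ := nhds_basis_closedBall.mem_iff.1 (hW.mem_nhds hx)
  obtain ⟨L, hL⟩ := hu _ isClosed_closedBall isBounded_closedBall hball
  exact (hL.continuousOn.continuousAt (closedBall_mem_nhds x hr)).continuousWithinAt

lemma continuous (hu : LocallyLipschitzOnSet u univ) : Continuous u :=
  continuousOn_univ.1 (hu.continuousOn isOpen_univ)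

end LocallyLipschitzOnSet

section UpperGradient

lemma enorm_deriv_comp_le_lipConst {γ : ℝ → X} (hγ : LipschitzWith 1 γ) {t : ℝ}
    (hd : DifferentiableAt ℝ (fun s => u (γ s)) t) :
    ‖deriv (fun s => u (γ s)) t‖ₑ ≤ lipConst u (γ t) := by
  set D := deriv (fun s => u (γ s)) t
  have hscaled : ∀ θ ∈ Ioo (0 : ℝ) 1, ENNReal.ofReal (θ * |D|) ≤ lipConst u (γ t) := by
    rintro θ ⟨hθ0, hθ1⟩
    have hline : Tendsto (fun r => t + θ * r) (𝓝[>] (0 : ℝ)) (𝓝[≠] t) := by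
      refine tendsto_nhdsWithin_iff.2 ⟨?_, ?_⟩
      · have : Continuous fun r => t + θ * r := by fun_prop
        simpa using (this.tendsto 0).mono_left nhdsWithin_le_nhds
      · filter_upwards [self_mem_nhdsWithin] with r (hr : 0 < r)
        simp [hθ0.ne', hr.ne']
    have hslope : Tendsto (fun r => ENNReal.ofReal (θ * |slope (fun s => u (γ s)) t (t + θ * r)|))
        (𝓝[>] 0) (𝓝 (ENNReal.ofReal (θ * |D|))) :=
      ENNReal.tendsto_ofReal
        (((hasDerivAt_iff_tendsto_slope.1 hd.hasDerivAt).comp hline).abs.const_mul θ)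
    refine hslope.liminf_eq.symm.trans_le (liminf_le_liminf ?_)
    filter_upwards [self_mem_nhdsWithin] with r (hr : 0 < r)
    have hmem : γ (t + θ * r) ∈ ball (γ t) r := by
      refine mem_ball.2 ((hγ.dist_le_mul _ _).trans_lt ?_)
      simp only [NNReal.coe_one, one_mul, dist_self_add_left, Real.norm_eq_abs,
        abs_of_pos (mul_pos hθ0 hr)]
      nlinarith
    refine le_trans (ENNReal.ofReal_le_ofReal (le_of_eq ?_))
      (ofReal_abs_sub_div_le_oscQuot (u := u) hmem)
    rw [slope_def_field, add_sub_cancel_left, abs_div, abs_of_pos (mul_pos hθ0 hr)]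
    field_simp
  have hlim : Tendsto (fun θ : ℝ => ENNReal.ofReal (θ * |D|)) (𝓝[<] 1)
      (𝓝 (ENNReal.ofReal (1 * |D|))) :=
    ENNReal.tendsto_ofReal ((tendsto_id.mono_left nhdsWithin_le_nhds).mul_const _)
  rw [Real.enorm_eq_ofReal_abs, ← one_mul |D|]
  refine le_of_tendsto hlim ?_
  filter_upwards [Ioo_mem_nhdsLT one_pos] with θ hθ using hscaled θ hθ

variable [MeasurableSpace X] [BorelSpace X]

lemma abs_sub_le_integral_lipConst_comp {δ : ℝ → X} (hδ : LipschitzWith 1 δ) (hu : Continuous u)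
    {K : Set X} {M : ℝ≥0} (hM : LipschitzOnWith M u K) (hK : ∀ t, K ∈ 𝓝 (δ t)) {L : ℝ}
    (hL : 0 ≤ L) :
    |u (δ 0) - u (δ L)| ≤ ∫ t in (0 : ℝ)..L, (lipConst u (δ t)).toReal := by
  have hbound (t : ℝ) : lipConst u (δ t) ≤ M := lipConst_le_of_lipschitzOnWith hM (hK t)
  have hf : LipschitzWith (M * 1) fun t => u (δ t) :=
    lipschitzOnWith_univ.1 (hM.comp hδ.lipschitzOnWith fun t _ => mem_of_mem_nhds (hK t))
  have hint : IntervalIntegrable (fun t => (lipConst u (δ t)).toReal) volume 0 L := by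
    refine (intervalIntegrable_const (c := (M : ℝ))).mono_fun
      ((measurable_lipConst hu).comp hδ.continuous.measurable).ennreal_toReal.aestronglyMeasurable
      (Eventually.of_forall fun t => ?_)
    simpa only [Real.norm_of_nonneg ENNReal.toReal_nonneg, Real.norm_of_nonneg M.coe_nonneg]
      using ENNReal.toReal_le_coe_of_le_coe (hbound t)
  rw [abs_sub_comm, ← Real.norm_eq_abs,
    ← (hf.lipschitzOnWith (s := uIcc 0 L)).absolutelyContinuousOnInterval.integral_deriv_eq_sub]
  refine intervalIntegral.norm_integral_le_of_norm_le hL ?_ hint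
  filter_upwards [hf.ae_differentiableAt_real] with t ht _
  rw [← toReal_enorm]
  exact ENNReal.toReal_mono ((hbound t).trans_lt ENNReal.coe_lt_top).ne
    (enorm_deriv_comp_le_lipConst hδ ht)

lemma LocallyLipschitzOnSet.isUpperGradientOf_lipConst (hu : LocallyLipschitzOnSet u univ) :
    IsUpperGradientOf (fun x => (lipConst u x).toReal) u := by
  intro L hL γ hγ
  have hδ : LipschitzWith 1 fun t => γ (projIcc 0 L hL t) := by
    rw [← one_mul (1 : ℝ≥0)]
    exact (lipschitzOnWith_iff_restrict.1 hγ).comp (LipschitzWith.projIcc hL)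
  have hδγ : ∀ t ∈ Icc 0 L, γ (projIcc 0 L hL t) = γ t := fun t ht => by
    rw [projIcc_of_mem hL ht]
  have hrange (t : ℝ) : dist (γ (projIcc 0 L hL t)) (γ 0) ≤ L := by
    have ht := (projIcc 0 L hL t).2
    have hdist := hγ.dist_le_mul _ ht 0 (left_mem_Icc.2 hL)
    rw [NNReal.coe_one, one_mul, Real.dist_eq, sub_zero, abs_of_nonneg ht.1] at hdist
    exact hdist.trans ht.2
  obtain ⟨M, hM⟩ := hu (closedBall (γ 0) (L + 1)) isClosed_closedBall isBounded_closedBall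
    (subset_univ _)
  have hnhds (t : ℝ) : closedBall (γ 0) (L + 1) ∈ 𝓝 (γ (projIcc 0 L hL t)) :=
    mem_of_superset (closedBall_mem_nhds _ one_pos)
      (closedBall_subset_closedBall' (by linarith [hrange t]))
  have hftc := abs_sub_le_integral_lipConst_comp hδ hu.continuous hM hnhds hL
  rw [hδγ 0 (left_mem_Icc.2 hL), hδγ L (right_mem_Icc.2 hL)] at hftc
  refine hftc.trans_eq (intervalIntegral.integral_congr fun t ht => ?_)
  rw [uIcc_of_le hL] at ht
  simp only [hδγ t ht]

end UpperGradient

end LipschitzConstants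

section PoincareInequality

/-- The `L¹` oscillation `inf_c ∫_B |w - c| dμ` of `w` on `B`. -/
def oscInt {X : Type u} [MeasurableSpace X] (μ : Measure X) (w : X → ℝ) (B : Set X) : ℝ≥0∞ :=
  ⨅ c : ℝ, ∫⁻ y in B, ‖w y - c‖ₑ ∂μ

section Oscillation

variable {X : Type u} [MeasurableSpace X] {μ : Measure X} {u v w : X → ℝ} {B : Set X}

lemma oscInt_le_lintegral : oscInt μ w B ≤ ∫⁻ y in B, ‖w y‖ₑ ∂μ :=
  iInf_le_of_le 0 (by simp only [sub_zero, le_refl])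

lemma oscInt_sub_le (hu : AEStronglyMeasurable u μ) :
    oscInt μ (fun y => u y - v y) B ≤ oscInt μ u B + oscInt μ v B := by
  refine ENNReal.le_iInf_add_iInf fun a b => iInf_le_of_le (a - b) ?_
  rw [← lintegral_add_left' (hu.aemeasurable.sub_const a).enorm.restrict]
  refine lintegral_mono fun y => ?_
  rw [sub_sub_sub_comm]
  exact enorm_sub_le

lemma lintegral_enorm_le_three_mul_oscInt {E : Set X} (hB : MeasurableSet B)
    (hE : MeasurableSet E) (hE0 : ∀ x ∈ E, w x = 0) (hfin : μ B ≠ ∞)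
    (hhalf : 2 * μ (B \ E) ≤ μ B) :
    ∫⁻ y in B, ‖w y‖ₑ ∂μ ≤ 3 * oscInt μ w B := by
  have hsplit : μ (B ∩ E) + μ (B \ E) = μ B := measure_inter_add_sdiff _ hE
  have hBE : μ B ≤ 2 * μ (B ∩ E) := by
    have hdiff : μ (B \ E) ≤ μ (B ∩ E) := by
      rw [← hsplit, two_mul] at hhalf
      exact (ENNReal.add_le_add_iff_right (measure_ne_top_of_subset sdiff_subset hfin)).1 hhalf
    rw [← hsplit, two_mul]
    gcongr
  rw [oscInt, ENNReal.mul_iInf_of_ne (by simp) (by simp)]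
  refine le_iInf fun c => ?_
  have hc : ‖c‖ₑ * μ (B ∩ E) ≤ ∫⁻ y in B, ‖w y - c‖ₑ ∂μ := by
    rw [← setLIntegral_const]
    refine (setLIntegral_mono_ae' (hB.inter hE) (Eventually.of_forall fun y hy => ?_)).trans
      (lintegral_mono_set inter_subset_left)
    rw [hE0 y hy.2, zero_sub, enorm_neg]
  calc ∫⁻ y in B, ‖w y‖ₑ ∂μ
      ≤ ∫⁻ y in B, (‖w y - c‖ₑ + ‖c‖ₑ) ∂μ :=
        lintegral_mono fun y => by simpa only [sub_add_cancel] using enorm_add_le (w y - c) c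
    _ = (∫⁻ y in B, ‖w y - c‖ₑ ∂μ) + ‖c‖ₑ * μ B := by
        rw [lintegral_add_right _ measurable_const, setLIntegral_const]
    _ ≤ (∫⁻ y in B, ‖w y - c‖ₑ ∂μ) + 2 * (‖c‖ₑ * μ (B ∩ E)) := by
        rw [mul_left_comm]; gcongr
    _ ≤ 3 * ∫⁻ y in B, ‖w y - c‖ₑ ∂μ := by
        rw [show (3 : ℝ≥0∞) = 1 + 2 by norm_num, add_mul, one_mul]; gcongr

end Oscillation

section WeakLimit

variable {ι : Type*} {X : Type u} [TopologicalSpace X] [MeasurableSpace X] [BorelSpace X]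

lemma exists_content_tendsto_ultrafilter (m : ι → Measure X) {M : ℝ≥0}
    (hm : ∀ i, m i univ ≤ M) (U : Ultrafilter ι) :
    ∃ c : Content X, (∀ K, c K ≤ M) ∧
      ∀ K : TopologicalSpace.Compacts X, Tendsto (fun i => m i K) U (𝓝 (c K)) := by
  have hle (i : ι) (A : Set X) : m i A ≤ M := (measure_mono (subset_univ A)).trans (hm i)
  have hex (A : Set X) : ∃ l : ℝ≥0, l ≤ M ∧ Tendsto (fun i => m i A) U (𝓝 (l : ℝ≥0∞)) := by
    obtain ⟨l, -, hl⟩ := isCompact_univ.ultrafilter_le_nhds (U.map fun i => m i A) (by simp)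
    have hlM : l ≤ M := le_of_tendsto' hl fun i => hle i A
    lift l to ℝ≥0 using (hlM.trans_lt ENNReal.coe_lt_top).ne
    exact ⟨l, ENNReal.coe_le_coe.1 hlM, hl⟩
  choose l hlM hl using hex
  have hadd (K₁ K₂ : Set X) :
      Tendsto (fun i => m i K₁ + m i K₂) U (𝓝 ((l K₁ + l K₂ : ℝ≥0) : ℝ≥0∞)) := by
    rw [ENNReal.coe_add]
    exact (hl K₁).add (hl K₂)
  refine ⟨{ toFun := fun K => l K, mono' := ?_, sup_disjoint' := ?_, sup_le' := ?_ },
    fun K => ENNReal.coe_le_coe.2 (hlM K), fun K => hl K⟩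
  · exact fun K₁ K₂ h => ENNReal.coe_le_coe.1
      (le_of_tendsto_of_tendsto' (hl K₁) (hl K₂) fun i => measure_mono h)
  · intro K₁ K₂ hd _ h₂
    refine ENNReal.coe_injective (tendsto_nhds_unique (hl _) ((hadd K₁ K₂).congr fun i => ?_))
    rw [TopologicalSpace.Compacts.coe_sup, measure_union hd h₂.measurableSet]
  · intro K₁ K₂
    refine ENNReal.coe_le_coe.1 (le_of_tendsto_of_tendsto' (hl _) (hadd K₁ K₂) fun i => ?_)
    rw [TopologicalSpace.Compacts.coe_sup]
    exact measure_union_le _ _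

lemma exists_isFiniteMeasure_liminf_le [T2Space X] {F : Filter ι} [F.NeBot] (m : ι → Measure X)
    {M : ℝ≥0} (hm : ∀ i, m i univ ≤ M) :
    ∃ ν : Measure X, IsFiniteMeasure ν ∧
      ∀ K, IsCompact K → liminf (fun i => m i K) F ≤ ν K := by
  obtain ⟨c, hcM, hc⟩ := exists_content_tendsto_ultrafilter m hm (Ultrafilter.of F)
  refine ⟨c.measure, ⟨?_⟩, fun K hK => ?_⟩
  · rw [c.measure_apply MeasurableSet.univ, c.outerMeasure_of_isOpen univ isOpen_univ]
    exact (iSup₂_le fun K _ => hcM K).trans_lt ENNReal.coe_lt_top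
  · calc liminf (fun i => m i K) F ≤ liminf (fun i => m i K) (Ultrafilter.of F) :=
          liminf_le_liminf_of_le (Ultrafilter.of_le F)
      _ = c ⟨K, hK⟩ := (hc ⟨K, hK⟩).liminf_eq
      _ ≤ c.measure K := by
          rw [c.measure_apply hK.measurableSet]
          exact c.le_outerMeasure_compacts ⟨K, hK⟩

end WeakLimit

/-- The Poincaré inequality for `w` with the measure `ν` in place of the variation of `w`;
any multiplicative constant is absorbed into `ν`. -/
def PoincareDominated {X : Type u} [PseudoMetricSpace X] [MeasurableSpace X] (μ ν : Measure X)
    (w : X → ℝ) : Prop :=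
  ∀ (x : X) (r : ℝ), 0 < r → oscInt μ w (ball x r) ≤ ENNReal.ofReal r * ν (closedBall x r)

lemma PoincareDominated.sub {X : Type u} [PseudoMetricSpace X] [MeasurableSpace X]
    {μ ν₁ ν₂ : Measure X} {u v : X → ℝ} (hu : PoincareDominated μ ν₁ u)
    (hv : PoincareDominated μ ν₂ v) (hum : AEStronglyMeasurable u μ) :
    PoincareDominated μ (ν₁ + ν₂) fun x => u x - v x := fun x r hr => by
  rw [Measure.add_apply, mul_add]
  exact (oscInt_sub_le hum).trans (add_le_add (hu x r hr) (hv x r hr))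

variable {X : Type u} [MetricSpace X] [ProperSpace X] [MeasurableSpace X] [BorelSpace X]
  {μ : Measure X} {Cd : ℝ≥0} {CP : ℝ} {u : X → ℝ}

lemma SupportsPoincare.oscInt_le (hP : SupportsPoincare μ CP) (hd : IsDoublingWith μ Cd)
    (hu : LocallyLipschitzOnSet u univ) (x : X) {r : ℝ} (hr : 0 < r) :
    oscInt μ u (ball x r) ≤
      ENNReal.ofReal CP * ENNReal.ofReal r * ∫⁻ y in ball x r, lipConst u y ∂μ := by
  have := hd.isLocallyFiniteMeasure
  obtain ⟨M, hM⟩ := hu (closedBall x r) isClosed_closedBall isBounded_closedBall (subset_univ _)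
  have hbound (y) (hy : y ∈ ball x r) : lipConst u y ≤ M :=
    lipConst_le_of_lipschitzOnWith (hM.mono ball_subset_closedBall) (isOpen_ball.mem_nhds hy)
  have hlip := measurable_lipConst hu.continuous
  have hlip_int : IntegrableOn (fun y => (lipConst u y).toReal) (ball x r) μ := by
    refine Measure.integrableOn_of_bounded (M := M) (hd.measure_ball_ne_top x r)
      hlip.ennreal_toReal.aestronglyMeasurable
      ((ae_restrict_iff' measurableSet_ball).2 (Eventually.of_forall fun y hy => ?_))
    rw [Real.norm_of_nonneg ENNReal.toReal_nonneg]
    exact ENNReal.toReal_le_coe_of_le_coe (hbound y hy)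
  have hpoincare := hP u hu _ (fun _ => ENNReal.toReal_nonneg) hlip.ennreal_toReal
    hu.isUpperGradientOf_lipConst x r hr
  refine iInf_le_of_le (⨍ z in ball x r, u z ∂μ) ?_
  generalize (⨍ z in ball x r, u z ∂μ) = c at hpoincare ⊢
  have hu_int : IntegrableOn (fun y => u y - c) (ball x r) μ :=
    (((hu.continuous.sub continuous_const).continuousOn.integrableOn_compact
      (isCompact_closedBall x r)).mono_set ball_subset_closedBall)
  have hpos : 0 < μ.real (ball x r) :=
    ENNReal.toReal_pos (hd.measure_ball_pos x hr).ne' (hd.measure_ball_ne_top x r)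
  rw [setAverage_eq, setAverage_eq, smul_eq_mul, smul_eq_mul, mul_left_comm,
    mul_le_mul_iff_right₀ (inv_pos.2 hpos)] at hpoincare
  calc ∫⁻ y in ball x r, ‖u y - c‖ₑ ∂μ
      = ENNReal.ofReal (∫ y in ball x r, |u y - c| ∂μ) :=
        (ofReal_integral_norm_eq_lintegral_enorm hu_int).symm
    _ ≤ ENNReal.ofReal (CP * r * ∫ y in ball x r, (lipConst u y).toReal ∂μ) :=
        ENNReal.ofReal_le_ofReal hpoincare
    _ = ENNReal.ofReal CP * ENNReal.ofReal r * ∫⁻ y in ball x r, lipConst u y ∂μ := by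
        rw [ENNReal.ofReal_mul' (integral_nonneg fun _ => ENNReal.toReal_nonneg),
          ENNReal.ofReal_mul' hr.le, ofReal_integral_eq_lintegral_ofReal hlip_int
            (Eventually.of_forall fun _ => ENNReal.toReal_nonneg)]
        congr 1
        exact setLIntegral_congr_fun measurableSet_ball fun y hy =>
          ENNReal.ofReal_toReal ((hbound y hy).trans_lt ENNReal.coe_lt_top).ne

lemma IsBV.exists_poincareDominated (hu : IsBV μ u) (hd : IsDoublingWith μ Cd)
    (hP : SupportsPoincare μ CP) :
    ∃ ν : Measure X, IsFiniteMeasure ν ∧ PoincareDominated μ ν u := by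
  obtain ⟨M, hM, -⟩ := ENNReal.lt_iff_exists_nnreal_btwn.1 hu.2
  simp only [totVarOn, iInf_lt_iff] at hM
  obtain ⟨us, hlip, hconv, hlim⟩ := hM
  obtain ⟨φ, hφ, hφM⟩ := extraction_of_frequently_atTop
    (frequently_lt_of_liminf_lt (by isBoundedDefault) hlim)
  let m (i : ℕ) : Measure X := ENNReal.ofReal CP • μ.withDensity (lipConst (us (φ i)))
  have hm (i : ℕ) : m i univ ≤ (CP.toNNReal * M : ℝ≥0) := by
    rw [Measure.smul_apply, withDensity_apply _ MeasurableSet.univ, ENNReal.coe_mul, smul_eq_mul]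
    exact mul_le_mul' le_rfl (hφM i).le
  obtain ⟨ν, hν, hνle⟩ := exists_isFiniteMeasure_liminf_le (F := atTop) m hm
  refine ⟨ν, hν, fun x r hr => ?_⟩
  have herr := (hconv (closedBall x r) isClosed_closedBall isBounded_closedBall
    (subset_univ _)).comp hφ.tendsto_atTop
  have hosc (i : ℕ) : oscInt μ u (ball x r) ≤ ENNReal.ofReal r * m i (closedBall x r) +
      ∫⁻ y in closedBall x r, ENNReal.ofReal |us (φ i) y - u y| ∂μ := by
    calc oscInt μ u (ball x r)
        ≤ oscInt μ (us (φ i)) (ball x r) +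
            oscInt μ (fun y => us (φ i) y - u y) (ball x r) := by
          simpa only [sub_sub_cancel] using oscInt_sub_le (B := ball x r)
            (v := fun y => us (φ i) y - u y) (hlip (φ i)).continuous.aestronglyMeasurable
      _ ≤ _ := add_le_add ?_ (oscInt_le_lintegral.trans ?_)
    · rw [Measure.smul_apply, withDensity_apply _ measurableSet_closedBall, smul_eq_mul,
        mul_left_comm, ← mul_assoc]
      exact (hP.oscInt_le hd (hlip (φ i)) x hr).trans
        (mul_le_mul' le_rfl (lintegral_mono_set ball_subset_closedBall))
    · simp only [Real.enorm_eq_ofReal_abs]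
      exact lintegral_mono_set ball_subset_closedBall
  calc oscInt μ u (ball x r) ≤ liminf (fun i => ENNReal.ofReal r * m i (closedBall x r) +
        ∫⁻ y in closedBall x r, ENNReal.ofReal |us (φ i) y - u y| ∂μ) atTop :=
        le_liminf_of_le (by isBoundedDefault) (Eventually.of_forall hosc)
    _ ≤ ENNReal.ofReal r * liminf (fun i => m i (closedBall x r)) atTop + 0 := by
        rw [← ENNReal.liminf_const_mul_of_ne_top ENNReal.ofReal_ne_top, ← herr.limsup_eq]
        exact liminf_add_le_liminf_add_limsup _ _
    _ ≤ ENNReal.ofReal r * ν (closedBall x r) := by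
        rw [add_zero]
        exact mul_le_mul' le_rfl (hνle _ (isCompact_closedBall x r))

end PoincareInequality

section Mollification

lemma enorm_integral_mul_le {X : Type u} [MeasurableSpace X] {μ : Measure X} {B : Set X}
    {φ f : X → ℝ} {M : ℝ≥0∞} (hM : M ≠ ∞) (hφ : ∀ y, ‖φ y‖ₑ ≤ M) (hφ0 : ∀ y ∉ B, φ y = 0) :
    ‖∫ y, φ y * f y ∂μ‖ₑ ≤ M * ∫⁻ y in B, ‖f y‖ₑ ∂μ := by
  rw [← setIntegral_eq_integral_of_forall_compl_eq_zero (s := B)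
    fun y hy => by rw [hφ0 y hy, zero_mul], ← lintegral_const_mul' _ _ hM]
  refine (enorm_integral_le_lintegral_enorm _).trans (lintegral_mono fun y => ?_)
  rw [enorm_mul]
  gcongr
  exact hφ y

variable {X : Type u} [MetricSpace X] {ρ : X → ℝ}

/-- The cone of height and radius `2 ρ x` centred at `x`, as a function of `y`. -/
def mollKernel (ρ : X → ℝ) (x y : X) : ℝ := max 0 (2 * ρ x - dist x y)

lemma mollKernel_nonneg (ρ : X → ℝ) (x y : X) : 0 ≤ mollKernel ρ x y := le_max_left _ _

lemma mollKernel_eq_zero {x y : X} (h : y ∉ ball x (2 * ρ x)) : mollKernel ρ x y = 0 :=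
  max_eq_left (by linarith [not_lt.1 (mt mem_ball'.2 h)])

lemma continuous_mollKernel (ρ : X → ℝ) (x : X) : Continuous (mollKernel ρ x) :=
  continuous_const.max (continuous_const.sub (continuous_const.dist continuous_id))

lemma hasCompactSupport_mollKernel [ProperSpace X] (ρ : X → ℝ) (x : X) :
    HasCompactSupport (mollKernel ρ x) :=
  HasCompactSupport.intro (isCompact_closedBall x (2 * ρ x)) fun _ hy =>
    mollKernel_eq_zero fun h => hy (ball_subset_closedBall h)

lemma enorm_mollKernel_le (ρ : X → ℝ) (x y : X) :
    ‖mollKernel ρ x y‖ₑ ≤ 2 * ENNReal.ofReal (ρ x) := by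
  rw [Real.enorm_of_nonneg (mollKernel_nonneg ρ x y), ← ENNReal.ofReal_ofNat 2,
    ← ENNReal.ofReal_mul zero_le_two, mollKernel, ENNReal.ofReal_max, ENNReal.ofReal_zero,
    zero_max]
  exact ENNReal.ofReal_le_ofReal (sub_le_self _ dist_nonneg)

lemma enorm_mollKernel_sub_le (hρ : IsScale ρ) (x x' y : X) :
    ‖mollKernel ρ x' y - mollKernel ρ x y‖ₑ ≤ 2 * edist x' x := by
  have hscale := abs_le.1 (hρ.abs_sub_le x' x)
  have htri := abs_le.1 (abs_dist_sub_le x' x y)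
  rw [Real.enorm_eq_ofReal_abs, edist_dist, ← ENNReal.ofReal_ofNat 2,
    ← ENNReal.ofReal_mul zero_le_two, mollKernel, mollKernel, max_comm, max_comm 0]
  exact ENNReal.ofReal_le_ofReal ((abs_max_sub_max_le_abs _ _ _).trans
    (abs_le.2 ⟨by linarith, by linarith⟩))

variable [MeasurableSpace X]

/-- The mollification of `w` at the variable scale `ρ`: the average of `w` with respect to the
weight `mollKernel`. -/
def moll (μ : Measure X) (ρ w : X → ℝ) (x : X) : ℝ :=
  (∫ y, mollKernel ρ x y * w y ∂μ) / ∫ y, mollKernel ρ x y ∂μ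

variable [ProperSpace X] [BorelSpace X] {μ : Measure X} {w : X → ℝ} {Cd : ℝ≥0}

lemma integrable_mollKernel_mul (hw : LocallyIntegrable w μ) (ρ : X → ℝ) (x : X) :
    Integrable (fun y => mollKernel ρ x y * w y) μ :=
  hw.integrable_smul_left_of_hasCompactSupport (continuous_mollKernel ρ x)
    (hasCompactSupport_mollKernel ρ x)

variable [IsLocallyFiniteMeasure μ]

lemma integrable_mollKernel (ρ : X → ℝ) (x : X) : Integrable (mollKernel ρ x) μ :=
  (continuous_mollKernel ρ x).integrable_of_hasCompactSupport (hasCompactSupport_mollKernel ρ x)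

lemma IsDoublingWith.inv_integral_mollKernel_le (hd : IsDoublingWith μ Cd) (hρ : IsScale ρ)
    {x x' : X} (hx : 0 < ρ x) (hxx' : dist x x' ≤ ρ x / 4) :
    0 < ∫ y, mollKernel ρ x' y ∂μ ∧ ‖∫ y, mollKernel ρ x' y ∂μ‖ₑ⁻¹ ≤
      2 * ((ENNReal.ofReal (ρ x))⁻¹ * (μ (ball x (ρ x)))⁻¹) := by
  have hker (y) (hy : y ∈ ball x (ρ x)) : ρ x / 2 ≤ mollKernel ρ x' y :=
    le_max_of_le_right (by
      linarith [mem_ball'.1 hy, dist_triangle_left x' y x, (abs_le.1 (hρ.abs_sub_le x x')).2])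
  have hmass : ENNReal.ofReal (ρ x / 2) * μ (ball x (ρ x)) ≤
      ENNReal.ofReal (∫ y, mollKernel ρ x' y ∂μ) := by
    rw [← setLIntegral_const, ofReal_integral_eq_lintegral_ofReal (integrable_mollKernel ρ x')
      (Eventually.of_forall (mollKernel_nonneg ρ x'))]
    exact (setLIntegral_mono' measurableSet_ball fun y hy =>
      ENNReal.ofReal_le_ofReal (hker y hy)).trans (setLIntegral_le_lintegral _ _)
  have hpos : 0 < ∫ y, mollKernel ρ x' y ∂μ :=
    ENNReal.ofReal_pos.1 ((ENNReal.mul_pos (ENNReal.ofReal_pos.2 (half_pos hx)).ne'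
      (hd.measure_ball_pos x hx).ne').trans_le hmass)
  refine ⟨hpos, ?_⟩
  rw [Real.enorm_of_nonneg hpos.le]
  refine (ENNReal.inv_le_inv.2 hmass).trans_eq ?_
  rw [ENNReal.mul_inv (.inr (hd.measure_ball_ne_top x _)) (.inl ENNReal.ofReal_ne_top),
    ENNReal.ofReal_div_of_pos two_pos, ENNReal.inv_div (.inl (by simp)) (.inl (by simp)),
    ENNReal.ofReal_ofNat, div_eq_mul_inv, mul_assoc]

lemma moll_sub_const (hw : LocallyIntegrable w μ) {x : X} (hx : 0 < ∫ y, mollKernel ρ x y ∂μ)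
    (c : ℝ) :
    moll μ ρ w x - c = (∫ y, mollKernel ρ x y * (w y - c) ∂μ) / ∫ y, mollKernel ρ x y ∂μ := by
  simp only [moll, mul_sub]
  rw [integral_sub (integrable_mollKernel_mul hw ρ x)
    ((integrable_mollKernel ρ x).mul_const c), integral_mul_const, div_sub' hx.ne']

lemma IsDoublingWith.enorm_moll_sub_const_le (hd : IsDoublingWith μ Cd) (hρ : IsScale ρ)
    (hw : LocallyIntegrable w μ) {x : X} (hx : 0 < ρ x) (c : ℝ) :
    ‖moll μ ρ w x - c‖ₑ ≤
      4 * ((∫⁻ y in ball x (2 * ρ x), ‖w y - c‖ₑ ∂μ) / μ (ball x (ρ x))) := by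
  obtain ⟨hmass, hinv⟩ := hd.inv_integral_mollKernel_le hρ hx (x' := x)
    (by rw [dist_self]; positivity)
  have hρ0 : ENNReal.ofReal (ρ x) * (ENNReal.ofReal (ρ x))⁻¹ = 1 :=
    ENNReal.mul_inv_cancel (ENNReal.ofReal_pos.2 hx).ne' ENNReal.ofReal_ne_top
  rw [moll_sub_const hw hmass, div_eq_mul_inv, enorm_mul, enorm_inv hmass.ne']
  calc ‖∫ y, mollKernel ρ x y * (w y - c) ∂μ‖ₑ * ‖∫ y, mollKernel ρ x y ∂μ‖ₑ⁻¹
      ≤ (2 * ENNReal.ofReal (ρ x) * ∫⁻ y in ball x (2 * ρ x), ‖w y - c‖ₑ ∂μ) *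
          (2 * ((ENNReal.ofReal (ρ x))⁻¹ * (μ (ball x (ρ x)))⁻¹)) :=
        mul_le_mul' (enorm_integral_mul_le (by finiteness) (enorm_mollKernel_le ρ x)
          fun _ => mollKernel_eq_zero) hinv
    _ = 2 * 2 * (ENNReal.ofReal (ρ x) * (ENNReal.ofReal (ρ x))⁻¹) *
          ((∫⁻ y in ball x (2 * ρ x), ‖w y - c‖ₑ ∂μ) * (μ (ball x (ρ x)))⁻¹) := by ring
    _ = 4 * ((∫⁻ y in ball x (2 * ρ x), ‖w y - c‖ₑ ∂μ) / μ (ball x (ρ x))) := by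
        rw [hρ0, mul_one, div_eq_mul_inv]; norm_num

lemma IsDoublingWith.setLIntegral_enorm_sub_moll_le (hd : IsDoublingWith μ Cd) (hρ : IsScale ρ)
    (hw : LocallyIntegrable w μ) {x : X} (hx : 0 < ρ x) :
    ∫⁻ y in ball x (4 * ρ x), ‖w y - moll μ ρ w x‖ₑ ∂μ ≤
      (1 + 4 * (Cd : ℝ≥0∞) ^ 2) * oscInt μ w (ball x (4 * ρ x)) := by
  rw [oscInt, ENNReal.mul_iInf_of_ne (by positivity) (by finiteness)]
  refine le_iInf fun c => ?_
  set I := ∫⁻ y in ball x (4 * ρ x), ‖w y - c‖ₑ ∂μ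
  have hball : μ (ball x (4 * ρ x)) ≤ (Cd : ℝ≥0∞) ^ 2 * μ (ball x (ρ x)) :=
    hd.measure_ball_le 2 hx (by rw [dist_self]; linarith)
  have hmoll : ‖moll μ ρ w x - c‖ₑ ≤ 4 * (I / μ (ball x (ρ x))) := by
    refine (hd.enorm_moll_sub_const_le hρ hw hx c).trans ?_
    gcongr
    exact lintegral_mono_set (ball_subset_ball (by linarith))
  calc ∫⁻ y in ball x (4 * ρ x), ‖w y - moll μ ρ w x‖ₑ ∂μ
      ≤ ∫⁻ y in ball x (4 * ρ x), (‖w y - c‖ₑ + ‖moll μ ρ w x - c‖ₑ) ∂μ :=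
        lintegral_mono fun y => by
          rw [← sub_sub_sub_cancel_right _ _ c]; exact enorm_sub_le
    _ = I + ‖moll μ ρ w x - c‖ₑ * μ (ball x (4 * ρ x)) := by
        rw [lintegral_add_right _ measurable_const, setLIntegral_const]
    _ ≤ I + 4 * (I / μ (ball x (ρ x))) * ((Cd : ℝ≥0∞) ^ 2 * μ (ball x (ρ x))) := by gcongr
    _ = I + 4 * (Cd : ℝ≥0∞) ^ 2 * (I / μ (ball x (ρ x)) * μ (ball x (ρ x))) := by ring
    _ = (1 + 4 * (Cd : ℝ≥0∞) ^ 2) * I := by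
        rw [ENNReal.div_mul_cancel (hd.measure_ball_pos x hx).ne' (hd.measure_ball_ne_top x _)]
        ring

lemma IsDoublingWith.enorm_moll_sub_le (hd : IsDoublingWith μ Cd) (hρ : IsScale ρ)
    (hw : LocallyIntegrable w μ) {x x' : X} (hx : 0 < ρ x) (hxx' : dist x x' ≤ ρ x / 4) :
    ‖moll μ ρ w x' - moll μ ρ w x‖ₑ ≤ 4 * (1 + 4 * (Cd : ℝ≥0∞) ^ 2) *
      (oscInt μ w (ball x (4 * ρ x)) / (ENNReal.ofReal (ρ x) * μ (ball x (ρ x)))) *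
        edist x' x := by
  set m := moll μ ρ w x
  obtain ⟨hmass, -⟩ := hd.inv_integral_mollKernel_le hρ hx (x' := x) (by rw [dist_self]; positivity)
  obtain ⟨hmass', hinv⟩ := hd.inv_integral_mollKernel_le hρ hx hxx'
  have hzero : ∫ y, mollKernel ρ x y * (w y - m) ∂μ = 0 := by
    have h := moll_sub_const hw hmass m
    rw [sub_self, eq_comm, div_eq_zero_iff] at h
    exact h.resolve_right hmass.ne'
  have hwm : LocallyIntegrable (fun y => w y - m) μ := hw.sub (locallyIntegrable_const m)
  have hsupp (y) (hy : y ∉ ball x (4 * ρ x)) : mollKernel ρ x' y - mollKernel ρ x y = 0 := by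
    rw [mollKernel_eq_zero, mollKernel_eq_zero, sub_zero]
    · exact fun h => hy (ball_subset_ball (by linarith) h)
    · refine fun h => hy (ball_subset_ball' ?_ h)
      linarith [dist_comm x x', (abs_le.1 (hρ.abs_sub_le x x')).1]
  rw [moll_sub_const hw hmass', div_eq_mul_inv, enorm_mul, enorm_inv hmass'.ne',
    ← sub_zero (∫ y, mollKernel ρ x' y * (w y - m) ∂μ), ← hzero,
    ← integral_sub (integrable_mollKernel_mul hwm ρ x') (integrable_mollKernel_mul hwm ρ x)]
  simp only [← sub_mul]
  calc ‖∫ y, (mollKernel ρ x' y - mollKernel ρ x y) * (w y - m) ∂μ‖ₑ *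
        ‖∫ y, mollKernel ρ x' y ∂μ‖ₑ⁻¹
      ≤ (2 * edist x' x * ((1 + 4 * (Cd : ℝ≥0∞) ^ 2) * oscInt μ w (ball x (4 * ρ x)))) *
          (2 * ((ENNReal.ofReal (ρ x))⁻¹ * (μ (ball x (ρ x)))⁻¹)) := by
        refine mul_le_mul' ((enorm_integral_mul_le (by finiteness)
          (enorm_mollKernel_sub_le hρ x x') hsupp).trans ?_) hinv
        gcongr
        exact hd.setLIntegral_enorm_sub_moll_le hρ hw hx
    _ = 2 * 2 * (1 + 4 * (Cd : ℝ≥0∞) ^ 2) * (oscInt μ w (ball x (4 * ρ x)) *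
          ((ENNReal.ofReal (ρ x))⁻¹ * (μ (ball x (ρ x)))⁻¹)) * edist x' x := by ring
    _ = _ := by
        rw [div_eq_mul_inv, ENNReal.mul_inv (.inr (hd.measure_ball_ne_top x _))
          (.inl ENNReal.ofReal_ne_top)]
        norm_num

lemma IsDoublingWith.locallyLipschitzOnSet_moll (hd : IsDoublingWith μ Cd) (hρ : IsScale ρ)
    (hw : LocallyIntegrable w μ) : LocallyLipschitzOnSet (moll μ ρ w) {x | 0 < ρ x} := by
  intro K hKc hKb hKρ
  refine LocallyLipschitzOn.exists_lipschitzOnWith_of_compact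
    (isCompact_of_isClosed_isBounded hKc hKb) fun x hxK => ?_
  have hx : 0 < ρ x := hKρ hxK
  set M : ℝ≥0∞ := 4 * (1 + 4 * (Cd : ℝ≥0∞) ^ 2) *
    ((∫⁻ z in closedBall x (8 * ρ x), ‖w z‖ₑ ∂μ) /
      (ENNReal.ofReal (ρ x / 2) * μ (ball x (ρ x / 2))))
  have hM : M ≠ ∞ := by
    have hwint := (hw.integrableOn_isCompact (isCompact_closedBall x (8 * ρ x))).2
    have hden := ENNReal.mul_pos (ENNReal.ofReal_pos.2 (half_pos hx)).ne'
      (hd.measure_ball_pos x (half_pos hx)).ne'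
    exact ENNReal.mul_ne_top (by finiteness) (ENNReal.div_ne_top (ne_of_lt hwint) hden.ne')
  refine ⟨M.toNNReal, ball x (ρ x / 16),
    mem_nhdsWithin_of_mem_nhds (ball_mem_nhds x (by positivity)), fun y hy z hz => ?_⟩
  rw [mem_ball] at hy hz
  obtain ⟨hlow, hupp⟩ := abs_le.1 (hρ.abs_sub_le z x)
  rw [edist_eq_enorm_sub, ENNReal.coe_toNNReal hM]
  have hout : ball z (4 * ρ z) ⊆ closedBall x (8 * ρ x) :=
    ball_subset_closedBall.trans (closedBall_subset_closedBall' (by linarith))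
  have hin : ball x (ρ x / 2) ⊆ ball z (ρ z) :=
    ball_subset_ball' (by rw [dist_comm]; linarith)
  have hle : ρ x / 2 ≤ ρ z := by linarith
  refine (hd.enorm_moll_sub_le hρ hw (by linarith)
    (by linarith [dist_triangle_right z y x])).trans ?_
  simp only [M]
  gcongr
  exact oscInt_le_lintegral.trans (lintegral_mono_set hout)

lemma IsDoublingWith.enorm_moll_sub_le_add (hd : IsDoublingWith μ Cd) (hρ : IsScale ρ)
    (hw : LocallyIntegrable w μ) {g : X → ℝ} {ε : ℝ≥0∞} {x : X} (hx : 0 < ρ x)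
    (hg : ∀ y ∈ ball x (2 * ρ x), ‖g y - g x‖ₑ ≤ ε) :
    ‖moll μ ρ w x - g x‖ₑ ≤
      4 * ((∫⁻ y in ball x (2 * ρ x), ‖w y - g y‖ₑ ∂μ) / μ (ball x (ρ x))) + 4 * Cd * ε := by
  have hsplit : ∫⁻ y in ball x (2 * ρ x), ‖w y - g x‖ₑ ∂μ ≤
      (∫⁻ y in ball x (2 * ρ x), ‖w y - g y‖ₑ ∂μ) + ε * (Cd * μ (ball x (ρ x))) := by
    calc ∫⁻ y in ball x (2 * ρ x), ‖w y - g x‖ₑ ∂μ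
        ≤ ∫⁻ y in ball x (2 * ρ x), (‖w y - g y‖ₑ + ε) ∂μ :=
          setLIntegral_mono' measurableSet_ball fun y hy => by
            rw [← sub_add_sub_cancel _ (g y)]
            exact (enorm_add_le _ _).trans (add_le_add le_rfl (hg y hy))
      _ = (∫⁻ y in ball x (2 * ρ x), ‖w y - g y‖ₑ ∂μ) + ε * μ (ball x (2 * ρ x)) := by
          rw [lintegral_add_right _ measurable_const, setLIntegral_const]
      _ ≤ _ := by gcongr; exact (hd x (ρ x) hx).2.1
  refine (hd.enorm_moll_sub_const_le hρ hw hx (g x)).trans ?_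
  calc 4 * ((∫⁻ y in ball x (2 * ρ x), ‖w y - g x‖ₑ ∂μ) / μ (ball x (ρ x)))
      ≤ 4 * (((∫⁻ y in ball x (2 * ρ x), ‖w y - g y‖ₑ ∂μ) + ε * (Cd * μ (ball x (ρ x)))) /
          μ (ball x (ρ x))) := by gcongr
    _ = 4 * ((∫⁻ y in ball x (2 * ρ x), ‖w y - g y‖ₑ ∂μ) / μ (ball x (ρ x))) +
          4 * Cd * ε * (μ (ball x (ρ x)) / μ (ball x (ρ x))) := by
        simp only [div_eq_mul_inv]; ring
    _ = _ := by
        rw [ENNReal.div_self (hd.measure_ball_pos x hx).ne' (hd.measure_ball_ne_top x _), mul_one]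

lemma IsDoublingWith.setLIntegral_enorm_moll_sub_le (hd : IsDoublingWith μ Cd) (hρ : IsScale ρ)
    (hw : LocallyIntegrable w μ) {g : X → ℝ} (hg : AEStronglyMeasurable g μ) {ε : ℝ≥0∞}
    {K K' : Set X} (hK : MeasurableSet K) (hK' : MeasurableSet K') (hpos : ∀ x ∈ K, 0 < ρ x)
    (hKK' : ∀ x ∈ K, ball x (8 * ρ x) ⊆ K')
    (hgε : ∀ x ∈ K, ∀ y ∈ ball x (2 * ρ x), ‖g y - g x‖ₑ ≤ ε) :
    ∫⁻ x in K, ‖moll μ ρ w x - w x‖ₑ ∂μ ≤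
      (4 * (Cd : ℝ≥0∞) ^ 5 + 1) * (∫⁻ x in K', ‖w x - g x‖ₑ ∂μ) + 4 * Cd * μ K * ε := by
  set ν := μ.withDensity fun y => ‖w y - g y‖ₑ
  have hν {A : Set X} (hA : MeasurableSet A) : ∫⁻ y in A, ‖w y - g y‖ₑ ∂μ = ν A :=
    (withDensity_apply _ hA).symm
  have hlm : AEMeasurable (fun y => ‖w y - g y‖ₑ) μ := (hw.aestronglyMeasurable.sub hg).enorm
  have hsub : K ⊆ K' := fun x hx => hKK' x hx (mem_ball_self (by linarith [hpos x hx]))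
  have hpt (x) (hx : x ∈ K) : ‖moll μ ρ w x - w x‖ₑ ≤
      4 * (ν (ball x (8 * ρ x)) / μ (ball x (ρ x))) + (4 * Cd * ε + ‖w x - g x‖ₑ) := by
    rw [← sub_sub_sub_cancel_right _ _ (g x), ← add_assoc]
    refine enorm_sub_le.trans (add_le_add_left
      ((hd.enorm_moll_sub_le_add hρ hw (hpos x hx) (hgε x hx)).trans ?_) _)
    rw [hν measurableSet_ball]
    gcongr
    · exact (hpos x hx).le
    · norm_num
  calc ∫⁻ x in K, ‖moll μ ρ w x - w x‖ₑ ∂μ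
      ≤ ∫⁻ x in K, (4 * (ν (ball x (8 * ρ x)) / μ (ball x (ρ x))) +
          (4 * Cd * ε + ‖w x - g x‖ₑ)) ∂μ := setLIntegral_mono' hK hpt
    _ = 4 * (∫⁻ x in K, ν (ball x (8 * ρ x)) / μ (ball x (ρ x)) ∂μ) +
          (4 * Cd * ε * μ K + ν K) := by
        rw [lintegral_add_right' _ (hlm.const_add _).restrict, lintegral_const_mul' _ _ (by simp),
          lintegral_add_left' aemeasurable_const, setLIntegral_const, hν hK]
    _ ≤ 4 * ((Cd : ℝ≥0∞) ^ 5 * ν K') + (4 * Cd * ε * μ K + ν K') := by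
        gcongr
        exact hd.setLIntegral_measure_ball_div_le hρ ν hpos hK' hKK'
    _ = _ := by rw [hν hK']; ring

lemma exists_uniformContinuous_setLIntegral_sub_le
    (hw : LocallyIntegrable w μ) {K : Set X} (hK : IsCompact K) {ε : ℝ≥0∞}
    (hε : ε ≠ 0) :
    ∃ g : X → ℝ, UniformContinuous g ∧ ∫⁻ y in K, ‖w y - g y‖ₑ ∂μ ≤ ε := by
  obtain ⟨g, hgs, hgε, hgc, -⟩ := ((hw.integrableOn_isCompact hK).integrable_indicator
    hK.measurableSet).exists_hasCompactSupport_lintegral_sub_le hε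
  refine ⟨g, hgs.uniformContinuous_of_continuous hgc, le_trans ?_ hgε⟩
  refine (setLIntegral_mono_ae' hK.measurableSet (Eventually.of_forall fun y hy => ?_)).trans
    (setLIntegral_le_lintegral K _)
  rw [indicator_of_mem hy]

lemma IsDoublingWith.tendstoL1loc_moll (hd : IsDoublingWith μ Cd) (hw : LocallyIntegrable w μ)
    {ρ : ℕ → X → ℝ} (hρ : ∀ i, IsScale (ρ i)) {U : Set X} (hpos : ∀ i, ∀ x ∈ U, 0 < ρ i x)
    {δ : ℕ → ℝ} (hδ : Tendsto δ atTop (𝓝 0)) (hρδ : ∀ i x, ρ i x ≤ δ i) :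
    TendstoL1loc μ (fun i => moll μ (ρ i) w) w U := by
  intro K hKc hKb hKU
  have hK : IsCompact K := isCompact_of_isClosed_isBounded hKc hKb
  simp only [← Real.enorm_eq_ofReal_abs]
  rw [ENNReal.tendsto_nhds_zero]
  intro ε hε
  have hε2 : ε / 2 ≠ 0 := by simpa using hε.ne'
  obtain ⟨ε₁, hε₁, hε₁'⟩ := ENNReal.exists_nnreal_pos_mul_lt
    (a := 4 * (Cd : ℝ≥0∞) ^ 5 + 1) (by finiteness) hε2
  obtain ⟨ε₂, hε₂, hε₂'⟩ := ENNReal.exists_nnreal_pos_mul_lt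
    (a := 4 * (Cd : ℝ≥0∞) * μ K) (ENNReal.mul_ne_top (by finiteness) hK.measure_ne_top) hε2
  obtain ⟨g, hgu, hgε⟩ := exists_uniformContinuous_setLIntegral_sub_le hw
    (hK.cthickening (r := 1)) (ε := ε₁) (by simpa using hε₁.ne')
  obtain ⟨s, hs, hgs⟩ := Metric.uniformContinuous_iff.1 hgu ε₂ (by exact_mod_cast hε₂)
  filter_upwards [hδ.eventually_lt_const (show 0 < min (1 / 8) (s / 2) by positivity)] with i hi
  obtain ⟨hi1, his⟩ := lt_min_iff.1 hi
  refine (hd.setLIntegral_enorm_moll_sub_le (hρ i) hw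
    hgu.continuous.aestronglyMeasurable hKc.measurableSet isClosed_cthickening.measurableSet
    (fun x hx => hpos i x (hKU hx)) (K' := cthickening 1 K) (ε := ε₂)
    (fun x hx => ?_) (fun x _ y hy => ?_)).trans ?_
  · refine (ball_subset_ball ?_).trans ((ball_subset_thickening hx 1).trans
      (thickening_subset_cthickening 1 K))
    linarith [hρδ i x]
  · rw [← edist_eq_enorm_sub, edist_nndist]
    exact_mod_cast (hgs (by linarith [mem_ball.1 hy, hρδ i x])).le
  · calc (4 * (Cd : ℝ≥0∞) ^ 5 + 1) * (∫⁻ x in cthickening 1 K, ‖w x - g x‖ₑ ∂μ) +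
          4 * Cd * μ K * ε₂
        ≤ ε₁ * (4 * (Cd : ℝ≥0∞) ^ 5 + 1) + ε₂ * (4 * Cd * μ K) := by
          rw [mul_comm (ε₁ : ℝ≥0∞), mul_comm (ε₂ : ℝ≥0∞)]; gcongr
      _ ≤ ε / 2 + ε / 2 := add_le_add hε₁'.le hε₂'.le
      _ = ε := ENNReal.add_halves ε

end Mollification

section HardyEstimate

variable {X : Type u} [PseudoMetricSpace X] {ρ : X → ℝ}

/-- The points at distance less than `a * ρ` from `G`, for a variable scale `ρ`. -/
def nearSet (ρ : X → ℝ) (G : Set X) (a : ℝ) : Set X := {x | ∃ e ∈ G, dist x e < a * ρ x}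

lemma isOpen_nearSet (hρ : Continuous ρ) (G : Set X) (a : ℝ) : IsOpen (nearSet ρ G a) := by
  have hunion : nearSet ρ G a = ⋃ e ∈ G, {x | dist x e < a * ρ x} := by
    ext x
    simp only [nearSet, mem_ofPred_eq, mem_iUnion, exists_prop]
  rw [hunion]
  exact isOpen_biUnion fun e _ => isOpen_lt (by fun_prop) (by fun_prop)

lemma pos_of_mem_nearSet {G : Set X} {a : ℝ} (ha : 0 < a) {x : X} (hx : x ∈ nearSet ρ G a) :
    0 < ρ x := by
  obtain ⟨e, -, hxe⟩ := hx
  exact pos_of_mul_pos_right (dist_nonneg.trans_lt hxe) ha.le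

lemma IsScale.ball_subset_nearSet (hρ : IsScale ρ) {G : Set X} {a b r : ℝ} {x : X}
    (hx : x ∈ nearSet ρ G a) (hr : (1 + b / 100) * r ≤ (b - a) * ρ x) (hb : 0 ≤ b) :
    ball x r ⊆ nearSet ρ G b := by
  obtain ⟨e, he, hxe⟩ := hx
  intro y hy
  have hyx := (mem_ball.1 hy).le
  have hρy := (abs_le.1 (hρ.abs_sub_le y x)).1
  have hscale : b * (ρ x - r / 100) ≤ b * ρ y := by gcongr; linarith
  exact ⟨e, he, by linarith [dist_triangle y x e, mem_ball.1 hy]⟩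

lemma IsScale.ball_subset_setOf_pos (hρ : IsScale ρ) {a : ℝ} (ha : a ≤ 50) {x : X}
    (hx : 0 < ρ x) : ball x (a * ρ x) ⊆ {y | ρ x ≤ 2 * ρ y ∧ ρ y ≤ 2 * ρ x} := by
  intro y hy
  obtain ⟨hlow, hupp⟩ := abs_le.1 (hρ.abs_sub_le y x)
  have hyx : dist y x < 50 * ρ x := (mem_ball.1 hy).trans_le (by gcongr)
  constructor <;> linarith

variable [MeasurableSpace X] {μ : Measure X} {w : X → ℝ}

/-- The measure `|w| / ρ ∂μ`, whose finiteness near the zero set of `w` is a Hardy inequality. -/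
def hardyMeasure (μ : Measure X) (ρ w : X → ℝ) : Measure X :=
  μ.withDensity fun y => ‖w y‖ₑ * (ENNReal.ofReal (ρ y))⁻¹

instance [SFinite μ] : SFinite (hardyMeasure μ ρ w) :=
  inferInstanceAs (SFinite (μ.withDensity _))

lemma inv_ofReal_le_two_mul {s t : ℝ} (h : t ≤ 2 * s) :
    (ENNReal.ofReal s)⁻¹ ≤ 2 * (ENNReal.ofReal t)⁻¹ := by
  rw [← ENNReal.inv_le_inv, ENNReal.mul_inv (by simp) (by simp), inv_inv, inv_inv, mul_comm,
    ← div_eq_mul_inv]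
  refine ENNReal.div_le_of_le_mul ?_
  rw [mul_comm, ← ENNReal.ofReal_ofNat, ← ENNReal.ofReal_mul zero_le_two]
  exact ENNReal.ofReal_le_ofReal h

variable [OpensMeasurableSpace X]

lemma IsScale.hardyMeasure_ball_le (hρ : IsScale ρ) {a : ℝ} (ha : a ≤ 50) {z : X}
    (hz : 0 < ρ z) :
    hardyMeasure μ ρ w (ball z (a * ρ z)) ≤
      2 * (ENNReal.ofReal (ρ z))⁻¹ * ∫⁻ y in ball z (a * ρ z), ‖w y‖ₑ ∂μ := by
  rw [hardyMeasure, withDensity_apply _ measurableSet_ball,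
    ← lintegral_const_mul' _ _ (ENNReal.mul_ne_top (by simp) (by simpa using hz))]
  refine setLIntegral_mono' measurableSet_ball fun y hy => ?_
  rw [mul_comm]
  gcongr
  exact inv_ofReal_le_two_mul (hρ.ball_subset_setOf_pos ha hz hy).1

lemma IsScale.setLIntegral_enorm_ball_le (hρ : IsScale ρ) {a : ℝ} (ha : a ≤ 50) {z : X}
    (hz : 0 < ρ z) :
    (ENNReal.ofReal (ρ z))⁻¹ * ∫⁻ y in ball z (a * ρ z), ‖w y‖ₑ ∂μ ≤
      2 * hardyMeasure μ ρ w (ball z (a * ρ z)) := by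
  rw [hardyMeasure, withDensity_apply _ measurableSet_ball,
    ← lintegral_const_mul' _ _ (by simpa using hz), ← lintegral_const_mul' _ _ (by simp)]
  refine setLIntegral_mono' measurableSet_ball fun y hy => ?_
  rw [mul_comm, mul_left_comm]
  gcongr
  exact inv_ofReal_le_two_mul (hρ.ball_subset_setOf_pos ha hz hy).2

variable {Cd : ℝ≥0} {ν : Measure X} {E : Set X}

lemma PoincareDominated.hardyMeasure_ball_le (hwν : PoincareDominated μ ν w)
    (hd : IsDoublingWith μ Cd) (hρ : IsScale ρ) (hE : MeasurableSet E) (hE0 : ∀ x ∈ E, w x = 0)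
    {η : ℝ} (hη : 0 < η) (hη1 : η ≤ 1) {z : X} (hz : 0 < ρ z)
    (hhalf : 2 * μ (ball z (2 * (η * ρ z)) \ E) ≤ μ (ball z (2 * (η * ρ z)))) :
    hardyMeasure μ ρ w (ball z (2 * (η * ρ z))) ≤
      12 * ENNReal.ofReal η * ν (ball z (8 * (η * ρ z))) := by
  have hr : 0 < η * ρ z := mul_pos hη hz
  calc hardyMeasure μ ρ w (ball z (2 * (η * ρ z)))
      ≤ 2 * (ENNReal.ofReal (ρ z))⁻¹ * ∫⁻ y in ball z (2 * (η * ρ z)), ‖w y‖ₑ ∂μ := by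
        rw [← mul_assoc]
        exact hρ.hardyMeasure_ball_le (by linarith) hz
    _ ≤ 2 * (ENNReal.ofReal (ρ z))⁻¹ *
          (3 * (ENNReal.ofReal (2 * (η * ρ z)) * ν (closedBall z (2 * (η * ρ z))))) := by
        gcongr
        refine (lintegral_enorm_le_three_mul_oscInt measurableSet_ball hE hE0
          (hd.measure_ball_ne_top _ _) hhalf).trans ?_
        gcongr
        exact hwν z _ (by positivity)
    _ = 12 * ENNReal.ofReal η * ν (closedBall z (2 * (η * ρ z))) *
          ((ENNReal.ofReal (ρ z))⁻¹ * ENNReal.ofReal (ρ z)) := by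
        rw [ENNReal.ofReal_mul zero_le_two, ENNReal.ofReal_mul hη.le, ENNReal.ofReal_ofNat]
        ring
    _ ≤ 12 * ENNReal.ofReal η * ν (ball z (8 * (η * ρ z))) := by
        rw [ENNReal.inv_mul_cancel (by simpa using hz) ENNReal.ofReal_ne_top, mul_one]
        gcongr
        exact closedBall_subset_ball (by linarith)

variable [SecondCountableTopology X] [SFinite μ] [SFinite ν]

lemma PoincareDominated.hardyMeasure_le (hwν : PoincareDominated μ ν w)
    (hd : IsDoublingWith μ Cd) (hρ : IsScale ρ) (hE : MeasurableSet E) (hE0 : ∀ x ∈ E, w x = 0)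
    {η : ℝ} (hη : 0 < η) (hη1 : η ≤ 1) {A S : Set X} (hA : MeasurableSet A)
    (hS : MeasurableSet S) (hApos : ∀ x ∈ A, 0 < ρ x) (hSpos : ∀ x ∈ S, 0 < ρ x)
    (hAS : ∀ x ∈ A, ball x (η * ρ x) ⊆ S)
    (hhalf : ∀ z ∈ S, 2 * μ (ball z (2 * (η * ρ z)) \ E) ≤ μ (ball z (2 * (η * ρ z)))) :
    hardyMeasure μ ρ w A ≤ 12 * (Cd : ℝ≥0∞) ^ 7 * (ENNReal.ofReal η * ν univ) := by
  have hσ : IsScale fun x => η * ρ x := hρ.const_mul hη.le hη1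
  calc hardyMeasure μ ρ w A
      ≤ (Cd : ℝ≥0∞) ^ 2 *
          ∫⁻ x in S, hardyMeasure μ ρ w (ball x (2 * (η * ρ x))) / μ (ball x (η * ρ x)) ∂μ :=
        hd.measure_le_setLIntegral_measure_ball_div hσ _ hA
          (fun y hy => mul_pos hη (hApos y hy)) hAS
    _ ≤ (Cd : ℝ≥0∞) ^ 2 * ∫⁻ x in S, 12 * ENNReal.ofReal η *
          (ν (ball x (8 * (η * ρ x))) / μ (ball x (η * ρ x))) ∂μ := by
        gcongr (Cd : ℝ≥0∞) ^ 2 * ?_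
        refine setLIntegral_mono' hS fun z hz => ?_
        rw [← mul_div_assoc]
        gcongr
        exact hwν.hardyMeasure_ball_le hd hρ hE hE0 hη hη1 (hSpos z hz) (hhalf z hz)
    _ ≤ (Cd : ℝ≥0∞) ^ 2 * (12 * ENNReal.ofReal η * ((Cd : ℝ≥0∞) ^ 5 * ν univ)) := by
        rw [lintegral_const_mul' _ _ (by finiteness)]
        gcongr
        exact hd.setLIntegral_measure_ball_div_le hσ ν (fun x hx => mul_pos hη (hSpos x hx))
          MeasurableSet.univ fun x _ => subset_univ _
    _ = _ := by ring

end HardyEstimate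

section SlopeIntegral

variable {X : Type u} [MetricSpace X] [ProperSpace X] [MeasurableSpace X] [BorelSpace X]
  {μ ν : Measure X} [IsLocallyFiniteMeasure μ] {Cd : ℝ≥0} {ρ w : X → ℝ}

lemma IsDoublingWith.upperLip_moll_le (hd : IsDoublingWith μ Cd) (hρ : IsScale ρ)
    (hw : LocallyIntegrable w μ) {x : X} (hx : 0 < ρ x) :
    upperLip (moll μ ρ w) x ≤ 4 * (1 + 4 * (Cd : ℝ≥0∞) ^ 2) *
      (oscInt μ w (ball x (4 * ρ x)) / (ENNReal.ofReal (ρ x) * μ (ball x (ρ x)))) := by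
  refine upperLip_le ?_
  filter_upwards [closedBall_mem_nhds x (show 0 < ρ x / 4 by positivity)] with y hy
  exact hd.enorm_moll_sub_le hρ hw hx (by rwa [dist_comm])

lemma PoincareDominated.upperLip_moll_le (hwν : PoincareDominated μ ν w)
    (hd : IsDoublingWith μ Cd) (hρ : IsScale ρ) (hw : LocallyIntegrable w μ) {x : X}
    (hx : 0 < ρ x) :
    upperLip (moll μ ρ w) x ≤
      16 * (1 + 4 * (Cd : ℝ≥0∞) ^ 2) * (ν (ball x (8 * ρ x)) / μ (ball x (ρ x))) := by
  have hosc : oscInt μ w (ball x (4 * ρ x)) ≤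
      ENNReal.ofReal (ρ x) * (4 * ν (ball x (8 * ρ x))) := by
    refine (hwν x (4 * ρ x) (by positivity)).trans ?_
    rw [ENNReal.ofReal_mul zero_le_four, ENNReal.ofReal_ofNat, mul_comm 4, mul_assoc]
    gcongr
    exact closedBall_subset_ball (by linarith)
  calc upperLip (moll μ ρ w) x
      ≤ 4 * (1 + 4 * (Cd : ℝ≥0∞) ^ 2) * (ENNReal.ofReal (ρ x) * (4 * ν (ball x (8 * ρ x))) /
          (ENNReal.ofReal (ρ x) * μ (ball x (ρ x)))) :=
        (hd.upperLip_moll_le hρ hw hx).trans (by gcongr)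
    _ = 16 * (1 + 4 * (Cd : ℝ≥0∞) ^ 2) * (ν (ball x (8 * ρ x)) / μ (ball x (ρ x))) := by
        rw [ENNReal.mul_div_mul_left _ _ (by simpa using hx) ENNReal.ofReal_ne_top, mul_div_assoc]
        ring

lemma IsDoublingWith.upperLip_moll_le_hardyMeasure (hd : IsDoublingWith μ Cd) (hρ : IsScale ρ)
    (hw : LocallyIntegrable w μ) {x : X} (hx : 0 < ρ x) :
    upperLip (moll μ ρ w) x ≤ 8 * (1 + 4 * (Cd : ℝ≥0∞) ^ 2) *
      (hardyMeasure μ ρ w (ball x (8 * ρ x)) / μ (ball x (ρ x))) := by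
  calc upperLip (moll μ ρ w) x
      ≤ 4 * (1 + 4 * (Cd : ℝ≥0∞) ^ 2) * ((∫⁻ y in ball x (8 * ρ x), ‖w y‖ₑ ∂μ) /
          (ENNReal.ofReal (ρ x) * μ (ball x (ρ x)))) := by
        refine (hd.upperLip_moll_le hρ hw hx).trans ?_
        gcongr
        exact oscInt_le_lintegral.trans
          (lintegral_mono_set (ball_subset_ball (by linarith)))
    _ = 4 * (1 + 4 * (Cd : ℝ≥0∞) ^ 2) * (((ENNReal.ofReal (ρ x))⁻¹ *
          ∫⁻ y in ball x (8 * ρ x), ‖w y‖ₑ ∂μ) / μ (ball x (ρ x))) := by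
        rw [div_eq_mul_inv, div_eq_mul_inv,
          ENNReal.mul_inv (.inl (by simpa using hx)) (.inl ENNReal.ofReal_ne_top)]
        ring
    _ ≤ 4 * (1 + 4 * (Cd : ℝ≥0∞) ^ 2) *
          (2 * hardyMeasure μ ρ w (ball x (8 * ρ x)) / μ (ball x (ρ x))) := by
        gcongr 4 * (1 + 4 * (Cd : ℝ≥0∞) ^ 2) * (?_ / _)
        exact hρ.setLIntegral_enorm_ball_le (by norm_num) hx
    _ = _ := by rw [mul_div_assoc]; ring

lemma PoincareDominated.setLIntegral_upperLip_moll_far_le [SFinite ν]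
    (hwν : PoincareDominated μ ν w) (hd : IsDoublingWith μ Cd) (hρ : IsScale ρ)
    (hw : LocallyIntegrable w μ) (G : Set X) :
    ∫⁻ x in {x | 0 < ρ x} \ nearSet ρ G 8, upperLip (moll μ ρ w) x ∂μ ≤
      16 * (1 + 4 * (Cd : ℝ≥0∞) ^ 2) * (Cd : ℝ≥0∞) ^ 5 * ν ({x | 0 < ρ x} \ closure G) := by
  have hU : MeasurableSet {x | 0 < ρ x} :=
    (isOpen_lt continuous_const hρ.continuous).measurableSet
  have hsub : ∀ x ∈ {x | 0 < ρ x} \ nearSet ρ G 8,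
      ball x (8 * ρ x) ⊆ {x | 0 < ρ x} \ closure G := by
    rintro x ⟨hx, hxG⟩
    refine subset_sdiff.2 ⟨fun y hy => ?_, Disjoint.closure_right ?_ isOpen_ball⟩
    · have hx0 : 0 < ρ x := hx
      have hρy := (hρ.ball_subset_setOf_pos (by norm_num) hx0 hy).1
      exact show 0 < ρ y by linarith
    · exact Set.disjoint_left.2 fun e hex heG => hxG ⟨e, heG, mem_ball'.1 hex⟩
  calc ∫⁻ x in {x | 0 < ρ x} \ nearSet ρ G 8, upperLip (moll μ ρ w) x ∂μ
      ≤ ∫⁻ x in {x | 0 < ρ x} \ nearSet ρ G 8, 16 * (1 + 4 * (Cd : ℝ≥0∞) ^ 2) *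
          (ν (ball x (8 * ρ x)) / μ (ball x (ρ x))) ∂μ :=
        setLIntegral_mono' (hU.diff (isOpen_nearSet hρ.continuous G 8).measurableSet)
          fun x hx => hwν.upperLip_moll_le hd hρ hw hx.1
    _ ≤ 16 * (1 + 4 * (Cd : ℝ≥0∞) ^ 2) *
          ((Cd : ℝ≥0∞) ^ 5 * ν ({x | 0 < ρ x} \ closure G)) := by
        rw [lintegral_const_mul' _ _ (by finiteness)]
        gcongr
        exact hd.setLIntegral_measure_ball_div_le hρ ν (fun x hx => hx.1)
          (hU.diff isClosed_closure.measurableSet) hsub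
    _ = _ := by ring

lemma PoincareDominated.setLIntegral_upperLip_moll_near_le [SFinite ν]
    (hwν : PoincareDominated μ ν w) (hd : IsDoublingWith μ Cd) (hρ : IsScale ρ)
    (hw : LocallyIntegrable w μ) {E : Set X} (hE : MeasurableSet E) (hE0 : ∀ x ∈ E, w x = 0)
    {η : ℝ} (hη : 0 < η) (hη1 : η ≤ 1) {G : Set X}
    (hhalf : ∀ z ∈ nearSet ρ G 20,
      2 * μ (ball z (2 * (η * ρ z)) \ E) ≤ μ (ball z (2 * (η * ρ z)))) :
    ∫⁻ x in nearSet ρ G 8, upperLip (moll μ ρ w) x ∂μ ≤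
      96 * (1 + 4 * (Cd : ℝ≥0∞) ^ 2) * (Cd : ℝ≥0∞) ^ 12 * (ENNReal.ofReal η * ν univ) := by
  have hmeas (a : ℝ) : MeasurableSet (nearSet ρ G a) :=
    (isOpen_nearSet hρ.continuous G a).measurableSet
  have hpos {a : ℝ} (ha : 0 < a) : ∀ x ∈ nearSet ρ G a, 0 < ρ x :=
    fun x hx => pos_of_mem_nearSet ha hx
  have hfirst : ∀ x ∈ nearSet ρ G 8, ball x (8 * ρ x) ⊆ nearSet ρ G 18 := fun x hx => by
    have := pos_of_mem_nearSet (by norm_num) hx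
    exact hρ.ball_subset_nearSet hx (by linarith) (by norm_num)
  have hsecond : ∀ x ∈ nearSet ρ G 18, ball x (η * ρ x) ⊆ nearSet ρ G 20 := fun x hx => by
    have hx0 := pos_of_mem_nearSet (by norm_num) hx
    have := mul_le_of_le_one_left hx0.le hη1
    exact hρ.ball_subset_nearSet hx (by linarith) (by norm_num)
  calc ∫⁻ x in nearSet ρ G 8, upperLip (moll μ ρ w) x ∂μ
      ≤ ∫⁻ x in nearSet ρ G 8, 8 * (1 + 4 * (Cd : ℝ≥0∞) ^ 2) *
          (hardyMeasure μ ρ w (ball x (8 * ρ x)) / μ (ball x (ρ x))) ∂μ :=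
        setLIntegral_mono' (hmeas 8) fun x hx =>
          hd.upperLip_moll_le_hardyMeasure hρ hw (hpos (by norm_num) x hx)
    _ ≤ 8 * (1 + 4 * (Cd : ℝ≥0∞) ^ 2) * ((Cd : ℝ≥0∞) ^ 5 *
          (12 * (Cd : ℝ≥0∞) ^ 7 * (ENNReal.ofReal η * ν univ))) := by
        rw [lintegral_const_mul' _ _ (by finiteness)]
        gcongr 8 * (1 + 4 * (Cd : ℝ≥0∞) ^ 2) * ?_
        refine (hd.setLIntegral_measure_ball_div_le hρ _ (hpos (by norm_num)) (hmeas 18)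
          hfirst).trans ?_
        gcongr
        exact hwν.hardyMeasure_le hd hρ hE hE0 hη hη1 (hmeas 18) (hmeas 20)
          (hpos (by norm_num)) (hpos (by norm_num)) hsecond hhalf
    _ = _ := by ring

lemma PoincareDominated.setLIntegral_upperLip_moll_le [SFinite ν]
    (hwν : PoincareDominated μ ν w) (hd : IsDoublingWith μ Cd) (hρ : IsScale ρ)
    (hw : LocallyIntegrable w μ) {E : Set X} (hE : MeasurableSet E) (hE0 : ∀ x ∈ E, w x = 0)
    {η : ℝ} (hη : 0 < η) (hη1 : η ≤ 1) {G : Set X}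
    (hhalf : ∀ z ∈ nearSet ρ G 20,
      2 * μ (ball z (2 * (η * ρ z)) \ E) ≤ μ (ball z (2 * (η * ρ z)))) :
    ∫⁻ x in {x | 0 < ρ x}, upperLip (moll μ ρ w) x ∂μ ≤
      96 * (1 + 4 * (Cd : ℝ≥0∞) ^ 2) * (Cd : ℝ≥0∞) ^ 12 * (ENNReal.ofReal η * ν univ) +
        16 * (1 + 4 * (Cd : ℝ≥0∞) ^ 2) * (Cd : ℝ≥0∞) ^ 5 * ν ({x | 0 < ρ x} \ closure G) := by
  refine (lintegral_mono_set (subset_union_right.trans_eq union_sdiff_self.symm)).trans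
    ((lintegral_union_le _ (nearSet ρ G 8) _).trans (add_le_add ?_ ?_))
  · exact hwν.setLIntegral_upperLip_moll_near_le hd hρ hw hE hE0 hη hη1 hhalf
  · exact hwν.setLIntegral_upperLip_moll_far_le hd hρ hw G

end SlopeIntegral

section DensityPoints

variable {X : Type u} [PseudoMetricSpace X] [MeasurableSpace X] {μ : Measure X} {Cd : ℝ≥0}
  {E : Set X}

lemma DensityOneAt.eventually_measure_sdiff_le (hd : IsDoublingWith μ Cd)
    (hE : MeasurableSet E) {x : X} (hx : DensityOneAt μ E x) {ε : ℝ≥0∞} (hε : ε ≠ 0) :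
    ∀ᶠ r in 𝓝[>] (0 : ℝ), μ (ball x r \ E) ≤ ε * μ (ball x r) := by
  filter_upwards [hx.eventually_const_lt (ENNReal.sub_lt_self (b := ε) ENNReal.one_ne_top
    one_ne_zero hε), self_mem_nhdsWithin] with r hr hr0
  have hfin := hd.measure_ball_ne_top x r
  have hinter : (1 - ε) * μ (ball x r) ≤ μ (ball x r ∩ E) := by
    rw [inter_comm]
    exact (ENNReal.le_div_iff_mul_le (.inl (hd.measure_ball_pos x hr0).ne') (.inl hfin)).1 hr.le
  refine (ENNReal.add_le_add_iff_left (a := (1 - ε) * μ (ball x r))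
    (ENNReal.mul_ne_top (by finiteness) hfin)).1 ?_
  calc (1 - ε) * μ (ball x r) + μ (ball x r \ E)
      ≤ μ (ball x r ∩ E) + μ (ball x r \ E) := by gcongr
    _ = 1 * μ (ball x r) := by rw [measure_inter_add_sdiff _ hE, one_mul]
    _ ≤ (1 - ε + ε) * μ (ball x r) := by gcongr; exact le_tsub_add
    _ = _ := add_mul _ _ _

/-- The points of `E` at which `E` fills a proportion at least `1 - ε` of all balls of radius
less than `t`. -/
def uniformDensitySet (μ : Measure X) (E : Set X) (ε : ℝ≥0∞) (t : ℝ) : Set X :=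
  {x | x ∈ E ∧ ∀ r, 0 < r → r < t → μ (ball x r \ E) ≤ ε * μ (ball x r)}

lemma iUnion_uniformDensitySet (hd : IsDoublingWith μ Cd) (hE : MeasurableSet E)
    (hdens : ∀ x ∈ E, DensityOneAt μ E x) {ε : ℝ≥0∞} (hε : ε ≠ 0) :
    ⋃ n : ℕ, uniformDensitySet μ E ε (1 / (n + 1)) = E := by
  refine subset_antisymm (iUnion_subset fun n x hx => hx.1) fun x hx => ?_
  obtain ⟨t, ht, hxt⟩ := mem_nhdsGT_iff_exists_Ioo_subset.1
    ((hdens x hx).eventually_measure_sdiff_le hd hE hε)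
  obtain ⟨n, hn⟩ := exists_nat_one_div_lt (mem_Ioi.1 ht)
  exact mem_iUnion.2 ⟨n, hx, fun r hr hrn => hxt ⟨hr, hrn.trans hn⟩⟩

lemma monotone_uniformDensitySet (μ : Measure X) (E : Set X) (ε : ℝ≥0∞) :
    Monotone fun n : ℕ => uniformDensitySet μ E ε (1 / (n + 1)) := fun _ _ hmn _ hx =>
  ⟨hx.1, fun r hr hrn => hx.2 r hr (hrn.trans_le (Nat.one_div_le_one_div hmn))⟩

lemma IsDoublingWith.two_mul_measure_ball_sdiff_le (hd : IsDoublingWith μ Cd) (k : ℕ)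
    {t R r : ℝ} {e z : X} (he : e ∈ uniformDensitySet μ E (2 * (Cd : ℝ≥0∞) ^ k)⁻¹ t)
    (hr : 0 < r) (hrR : dist z e + r ≤ R) (hRt : R < t) (hRr : dist z e + R ≤ 2 ^ k * r) :
    2 * μ (ball z r \ E) ≤ μ (ball z r) := by
  have hCd : 2 * (Cd : ℝ≥0∞) ^ k ≠ 0 := mul_ne_zero two_ne_zero (hd.constant_pow_ne_zero z k)
  calc 2 * μ (ball z r \ E) ≤ 2 * μ (ball e R \ E) := by
        gcongr
        exact ball_subset_ball' (by linarith)
    _ ≤ 2 * ((2 * (Cd : ℝ≥0∞) ^ k)⁻¹ * μ (ball e R)) := by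
        gcongr
        exact he.2 R (by linarith [dist_nonneg (x := z) (y := e)]) hRt
    _ ≤ 2 * ((2 * (Cd : ℝ≥0∞) ^ k)⁻¹ * ((Cd : ℝ≥0∞) ^ k * μ (ball z r))) := by
        gcongr
        exact hd.measure_ball_le k hr (by rwa [dist_comm])
    _ = (2 * (Cd : ℝ≥0∞) ^ k)⁻¹ * (2 * (Cd : ℝ≥0∞) ^ k) * μ (ball z r) := by ring
    _ = μ (ball z r) := by rw [ENNReal.inv_mul_cancel hCd (by finiteness), one_mul]

lemma IsDoublingWith.two_mul_measure_ball_scale_sdiff_le (hd : IsDoublingWith μ Cd) (m : ℕ)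
    {t : ℝ} {ρ : X → ℝ} (hρt : ∀ x, 22 * ρ x < t) {z : X}
    (hz : z ∈ nearSet ρ (uniformDensitySet μ E (2 * (Cd : ℝ≥0∞) ^ (m + 5))⁻¹ t) 20) :
    2 * μ (ball z (2 * ((1 / 2) ^ m * ρ z)) \ E) ≤ μ (ball z (2 * ((1 / 2) ^ m * ρ z))) := by
  have hz0 : 0 < ρ z := pos_of_mem_nearSet (by norm_num) hz
  obtain ⟨e, he, hze⟩ := hz
  have hle : (1 / 2) ^ m * ρ z ≤ ρ z :=
    mul_le_of_le_one_left hz0.le (pow_le_one₀ (by norm_num) (by norm_num))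
  have hpow : (2 : ℝ) ^ (m + 5) * (2 * ((1 / 2) ^ m * ρ z)) = 64 * ρ z := by
    rw [pow_add, one_div, inv_pow]
    field_simp
    norm_num
  exact hd.two_mul_measure_ball_sdiff_le (m + 5) he (R := 22 * ρ z) (by positivity)
    (by linarith) (hρt z) (by linarith)

variable [OpensMeasurableSpace X]

lemma exists_isOpen_measure_sdiff_closure_le (ν : Measure X) [IsFiniteMeasure ν]
    [ν.OuterRegular] {G : ℕ → Set X} (hG : Monotone G) {ε : ℝ≥0∞} (hε : ε ≠ 0) :
    ∃ (U : Set X) (n : ℕ), IsOpen U ∧ ⋃ n, G n ⊆ U ∧ ν (U \ closure (G n)) ≤ ε := by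
  obtain ⟨U, hGU, hU, hνU⟩ := (⋃ n, G n).exists_isOpen_lt_add (μ := ν) (measure_ne_top _ _)
    (ε := ε / 2) (by simpa using hε)
  have hlim := tendsto_measure_iUnion_atTop (μ := ν) hG
  obtain ⟨n, hn⟩ := ((hlim.add_const (ε / 2)).eventually_const_lt
    (ENNReal.lt_add_right (measure_ne_top _ _) (by simpa using hε))).exists
  refine ⟨U, n, hU, hGU,
    (ENNReal.add_le_add_iff_left (measure_ne_top ν (U ∩ closure (G n)))).1 ?_⟩
  rw [measure_inter_add_sdiff _ isClosed_closure.measurableSet]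
  calc ν U ≤ ν (G n) + ε / 2 + ε / 2 := hνU.le.trans (add_le_add hn.le le_rfl)
    _ = ν (G n) + ε := by rw [add_assoc, ENNReal.add_halves]
    _ ≤ _ := by
      gcongr
      exact subset_inter ((subset_iUnion G n).trans hGU) subset_closure

end DensityPoints

lemma exists_isScale_setOf_pos_eq {X : Type u} [PseudoMetricSpace X] {U : Set X}
    (hU : IsOpen U) {δ : ℝ} (hδ : 0 < δ) :
    ∃ ρ : X → ℝ, IsScale ρ ∧ {x | 0 < ρ x} = U ∧ ∀ x, ρ x ≤ δ := by
  rcases eq_or_ne U univ with rfl | hne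
  · exact ⟨fun _ => δ, LipschitzWith.const' δ, eq_univ_of_forall fun _ => hδ, fun _ => le_rfl⟩
  have hlip : LipschitzWith 1 fun x => min δ (infDist x Uᶜ) := (lipschitz_infDist_pt Uᶜ).const_min δ
  have hpos : ∀ x, 0 < infDist x Uᶜ ↔ x ∈ U := fun x => by
    rw [← hU.isClosed_compl.notMem_iff_infDist_pos (nonempty_compl.2 hne), notMem_compl_iff]
  refine ⟨fun x => min δ (infDist x Uᶜ) / 100, ?_, ?_, fun x => ?_⟩
  · refine LipschitzWith.of_dist_le_mul fun x y => ?_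
    rw [Real.dist_eq, ← sub_div, abs_div, abs_of_pos (by norm_num : (0 : ℝ) < 100), ← Real.dist_eq,
      div_eq_inv_mul]
    simpa using hlip.dist_le_mul x y
  · ext x
    simp [hδ, hpos]
  · linarith [min_le_left δ (infDist x Uᶜ)]

section TotalVariation

variable {X : Type u} [PseudoMetricSpace X] [MeasurableSpace X] {μ : Measure X} {f v w : X → ℝ}
  {A B W : Set X}

/-- A majorant of `totVarSet`, built from the upper slope `upperLip` instead of `lipConst`, which
does not satisfy the triangle inequality. The supremum over `i` may be used instead of an upper
limit since one can pass to tails of the approximating sequence. -/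
def upperTotVarSet (μ : Measure X) (f : X → ℝ) (A : Set X) : ℝ≥0∞ :=
  ⨅ (W : Set X) (_ : IsOpen W) (_ : A ⊆ W) (us : ℕ → X → ℝ)
    (_ : ∀ i, LocallyLipschitzOnSet (us i) W) (_ : TendstoL1loc μ us f W),
    ⨆ i, ∫⁻ x in W, upperLip (us i) x ∂μ

lemma upperTotVarSet_le_of_forall_le {us : ℕ → X → ℝ} {c : ℝ≥0∞} (hW : IsOpen W) (hAW : A ⊆ W)
    (hlip : ∀ i, LocallyLipschitzOnSet (us i) W) (hconv : TendstoL1loc μ us f W)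
    (hc : ∀ i, ∫⁻ x in W, upperLip (us i) x ∂μ ≤ c) : upperTotVarSet μ f A ≤ c :=
  iInf₂_le_of_le W hW (iInf₂_le_of_le hAW us (iInf₂_le_of_le hlip hconv (iSup_le hc)))

lemma totVarSet_le_totVarOn (hW : IsOpen W) (hAW : A ⊆ W) :
    totVarSet μ f A ≤ totVarOn μ f W :=
  iInf₂_le_of_le W hW (iInf_le _ hAW)

lemma totVarOn_le_liminf {us : ℕ → X → ℝ} (hlip : ∀ i, LocallyLipschitzOnSet (us i) W)
    (hconv : TendstoL1loc μ us f W) :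
    totVarOn μ f W ≤ liminf (fun i => ∫⁻ x in W, lipConst (us i) x ∂μ) atTop :=
  iInf₂_le_of_le us hlip (iInf_le _ hconv)

lemma totVarSet_le_upperTotVarSet (f : X → ℝ) (A : Set X) :
    totVarSet μ f A ≤ upperTotVarSet μ f A := by
  refine le_iInf₂ fun W hW => le_iInf₂ fun hAW us => le_iInf₂ fun hlip hconv => ?_
  refine (totVarSet_le_totVarOn hW hAW).trans ((totVarOn_le_liminf hlip hconv).trans ?_)
  refine liminf_le_of_le (h := fun c hc => ?_)
  obtain ⟨i, hi⟩ := hc.exists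
  exact hi.trans (le_iSup_of_le i (lintegral_mono fun x => lipConst_le_upperLip _ x))

lemma upperTotVarSet_mono (hAB : A ⊆ B) : upperTotVarSet μ f A ≤ upperTotVarSet μ f B :=
  iInf₂_mono fun _ _ => iInf_mono' fun hBW => ⟨hAB.trans hBW, le_rfl⟩

lemma TendstoL1loc.mono {us : ℕ → X → ℝ} {V : Set X} (hu : TendstoL1loc μ us f W) (h : V ⊆ W) :
    TendstoL1loc μ us f V :=
  fun K hKc hKb hKV => hu K hKc hKb (hKV.trans h)

lemma TendstoL1loc.add [OpensMeasurableSpace X] {vs ws : ℕ → X → ℝ}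
    (hvs : TendstoL1loc μ vs v W) (hws : TendstoL1loc μ ws w W)
    (hlip : ∀ i, LocallyLipschitzOnSet (vs i) W) (hv : AEStronglyMeasurable v μ) :
    TendstoL1loc μ (fun i x => vs i x + ws i x) (fun x => v x + w x) W := by
  intro K hKc hKb hKW
  have hsum := (hvs K hKc hKb hKW).add (hws K hKc hKb hKW)
  rw [add_zero] at hsum
  refine tendsto_of_tendsto_of_tendsto_of_le_of_le tendsto_const_nhds hsum (fun _ => zero_le)
    fun i => ?_
  obtain ⟨L, hL⟩ := hlip i K hKc hKb hKW
  have hmeas : AEMeasurable (fun x => ENNReal.ofReal |vs i x - v x|) (μ.restrict K) :=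
    ((hL.continuousOn.aemeasurable hKc.measurableSet).sub
      hv.aemeasurable.restrict).abs.ennreal_ofReal
  rw [← lintegral_add_left' hmeas]
  refine lintegral_mono fun x => ?_
  rw [← ENNReal.ofReal_add (abs_nonneg _) (abs_nonneg _), add_sub_add_comm]
  exact ENNReal.ofReal_le_ofReal (abs_add_le _ _)

lemma liminf_setLIntegral_lipConst_add_le [OpensMeasurableSpace X] {U : Set X}
    {vs ws : ℕ → X → ℝ} (hW : IsOpen W) (hU : IsOpen U)
    (hws : ∀ i, LocallyLipschitzOnSet (ws i) U) :
    liminf (fun i => ∫⁻ x in W ∩ U, lipConst (fun y => vs i y + ws i y) x ∂μ) atTop ≤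
      liminf (fun i => ∫⁻ x in W, lipConst (vs i) x ∂μ) atTop +
        ⨆ i, ∫⁻ x in U, upperLip (ws i) x ∂μ := by
  have hmeas (i : ℕ) : AEMeasurable (upperLip (ws i)) (μ.restrict (W ∩ U)) :=
    aemeasurable_upperLip μ (hW.inter hU).measurableSet
      (((hws i).continuousOn hU).mono inter_subset_right)
  calc liminf (fun i => ∫⁻ x in W ∩ U, lipConst (fun y => vs i y + ws i y) x ∂μ) atTop
      ≤ liminf (fun i => (∫⁻ x in W, lipConst (vs i) x ∂μ) +
          ∫⁻ x in U, upperLip (ws i) x ∂μ) atTop := by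
        refine liminf_le_liminf (Eventually.of_forall fun i => ?_)
        refine (lintegral_mono fun x => lipConst_add_le (vs i) (ws i) x).trans ?_
        rw [lintegral_add_right' _ (hmeas i)]
        exact add_le_add (lintegral_mono_set inter_subset_left)
          (lintegral_mono_set inter_subset_right)
    _ ≤ _ := (liminf_add_le_liminf_add_limsup _ _).trans (add_le_add le_rfl limsup_le_iSup)

lemma totVarSet_add_le [OpensMeasurableSpace X] (hv : AEStronglyMeasurable v μ) (w : X → ℝ)
    (A : Set X) :
    totVarSet μ (fun x => v x + w x) A ≤ totVarSet μ v A + upperTotVarSet μ w A := by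
  simp only [totVarSet, totVarOn, upperTotVarSet, ENNReal.iInf_add, ENNReal.add_iInf]
  refine le_iInf₂ fun U hU => le_iInf₂ fun hAU ws => le_iInf₂ fun hwlip hwconv =>
    le_iInf₂ fun W hW => le_iInf₂ fun hAW vs => le_iInf₂ fun hvlip hvconv => ?_
  have hvlip' (i : ℕ) := (hvlip i).mono (inter_subset_left (t := U))
  refine (totVarSet_le_totVarOn (hW.inter hU) (subset_inter hAW hAU)).trans
    ((totVarOn_le_liminf (us := fun i x => vs i x + ws i x)
      (fun i => (hvlip' i).add ((hwlip i).mono inter_subset_right))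
      ((hvconv.mono inter_subset_left).add (hwconv.mono inter_subset_right) hvlip' hv)).trans ?_)
  exact liminf_setLIntegral_lipConst_add_le hW hU hwlip

end TotalVariation

section EqualityOnDensityPoints

variable {X : Type u} [MetricSpace X] [MeasurableSpace X] [BorelSpace X] {μ : Measure X}
  {Cd : ℝ≥0} {E : Set X}

lemma PoincareDominated.upperTotVarSet_le [ProperSpace X] [IsLocallyFiniteMeasure μ]
    {ν : Measure X} [IsFiniteMeasure ν] {w : X → ℝ} (hwν : PoincareDominated μ ν w)
    (hd : IsDoublingWith μ Cd) (hw : LocallyIntegrable w μ) (hE : MeasurableSet E)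
    (hdens : ∀ x ∈ E, DensityOneAt μ E x) (hE0 : ∀ x ∈ E, w x = 0) (m : ℕ) :
    upperTotVarSet μ w E ≤ (96 * (1 + 4 * (Cd : ℝ≥0∞) ^ 2) * (Cd : ℝ≥0∞) ^ 12 * ν univ +
      16 * (1 + 4 * (Cd : ℝ≥0∞) ^ 2) * (Cd : ℝ≥0∞) ^ 5) * ENNReal.ofReal ((1 / 2) ^ m) := by
  set ε : ℝ≥0∞ := (2 * (Cd : ℝ≥0∞) ^ (m + 5))⁻¹
  have hη : (0 : ℝ) < (1 / 2) ^ m := by positivity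
  have hGE : ⋃ n : ℕ, uniformDensitySet μ E ε (1 / (n + 1)) = E :=
    iUnion_uniformDensitySet hd hE hdens (ENNReal.inv_ne_zero.2 (by finiteness))
  obtain ⟨U, n, hU, hEU, hνU⟩ := exists_isOpen_measure_sdiff_closure_le ν
    (monotone_uniformDensitySet μ E ε) (ENNReal.ofReal_pos.2 hη).ne'
  rw [hGE] at hEU
  set t : ℝ := 1 / (n + 1)
  have ht : 0 < t := by positivity
  have hδ (i : ℕ) : 0 < t / 23 * (1 / (i + 1)) := by positivity
  choose ρ hρ hρU hρδ using fun i => exists_isScale_setOf_pos_eq hU (hδ i)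
  have hρt (i : ℕ) (x : X) : 22 * ρ i x < t := by
    have hle : (1 : ℝ) / (i + 1) ≤ 1 := by
      rw [div_le_one (by positivity)]
      linarith [i.cast_nonneg (α := ℝ)]
    linarith [hρδ i x, mul_le_of_le_one_right (by positivity : 0 ≤ t / 23) hle]
  refine upperTotVarSet_le_of_forall_le hU hEU (us := fun i => moll μ (ρ i) w)
    (fun i => hρU i ▸ hd.locallyLipschitzOnSet_moll (hρ i) hw)
    (hd.tendstoL1loc_moll hw hρ (fun i x hx => (hρU i).ge hx)
      (by simpa using tendsto_one_div_add_atTop_nhds_zero_nat.const_mul (t / 23)) hρδ)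
    fun i => ?_
  have hslope := hwν.setLIntegral_upperLip_moll_le hd (hρ i) hw hE hE0 hη
    (pow_le_one₀ (by norm_num) (by norm_num)) fun z hz =>
      hd.two_mul_measure_ball_scale_sdiff_le m (hρt i) hz
  rw [hρU i] at hslope
  refine hslope.trans ?_
  rw [add_mul, mul_comm (ENNReal.ofReal _), ← mul_assoc]
  gcongr

lemma PoincareDominated.upperTotVarSet_eq_zero [ProperSpace X] [IsLocallyFiniteMeasure μ]
    {ν : Measure X} [IsFiniteMeasure ν] {w : X → ℝ} (hwν : PoincareDominated μ ν w)
    (hd : IsDoublingWith μ Cd) (hw : LocallyIntegrable w μ) (hE : MeasurableSet E)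
    (hdens : ∀ x ∈ E, DensityOneAt μ E x) (hE0 : ∀ x ∈ E, w x = 0) :
    upperTotVarSet μ w E = 0 := by
  have hpow : Tendsto (fun m : ℕ => ENNReal.ofReal ((1 / 2) ^ m)) atTop (𝓝 0) := by
    simpa using ENNReal.tendsto_ofReal
      (tendsto_pow_atTop_nhds_zero_of_lt_one (r := (1 / 2 : ℝ)) (by norm_num) (by norm_num))
  have hlim := ENNReal.Tendsto.const_mul hpow
    (a := 96 * (1 + 4 * (Cd : ℝ≥0∞) ^ 2) * (Cd : ℝ≥0∞) ^ 12 * ν univ +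
      16 * (1 + 4 * (Cd : ℝ≥0∞) ^ 2) * (Cd : ℝ≥0∞) ^ 5) (.inr (by finiteness))
  rw [mul_zero] at hlim
  exact le_zero_iff.1 (ge_of_tendsto' hlim (hwν.upperTotVarSet_le hd hw hE hdens hE0))

variable [CompleteSpace X] {CP : ℝ} {u v : X → ℝ}

lemma IsBV.upperTotVarSet_sub_eq_zero (hu : IsBV μ u) (hv : IsBV μ v) (hd : IsDoublingWith μ Cd)
    (hP : SupportsPoincare μ CP) (hE : MeasurableSet E)
    (hdens : ∀ x ∈ E, DensityOneAt μ E x) (heq : ∀ x ∈ E, u x = v x) :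
    upperTotVarSet μ (fun x => u x - v x) E = 0 := by
  have := hd.properSpace
  have := hd.isLocallyFiniteMeasure
  obtain ⟨ν₁, _, hν₁⟩ := hu.exists_poincareDominated hd hP
  obtain ⟨ν₂, _, hν₂⟩ := hv.exists_poincareDominated hd hP
  exact (hν₁.sub hν₂ hu.1.aestronglyMeasurable).upperTotVarSet_eq_zero hd (hu.1.sub hv.1) hE hdens
    fun x hx => sub_eq_zero.2 (heq x hx)

lemma IsBV.totVarSet_le_of_eqOn (hu : IsBV μ u) (hv : IsBV μ v) (hd : IsDoublingWith μ Cd)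
    (hP : SupportsPoincare μ CP) (hE : MeasurableSet E)
    (hdens : ∀ x ∈ E, DensityOneAt μ E x) (heq : ∀ x ∈ E, u x = v x) {A : Set X} (hA : A ⊆ E) :
    totVarSet μ u A ≤ totVarSet μ v A := by
  have := hd.properSpace
  calc totVarSet μ u A = totVarSet μ (fun x => v x + (u x - v x)) A := by
        simp only [add_sub_cancel]
    _ ≤ totVarSet μ v A + upperTotVarSet μ (fun x => u x - v x) A :=
        totVarSet_add_le hv.1.aestronglyMeasurable _ A
    _ ≤ totVarSet μ v A + upperTotVarSet μ (fun x => u x - v x) E := by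
        gcongr
        exact upperTotVarSet_mono hA
    _ = totVarSet μ v A := by
        rw [hu.upperTotVarSet_sub_eq_zero hv hd hP hE hdens heq, add_zero]

end EqualityOnDensityPoints

theorem statement4_general {X : Type u} [MetricSpace X] [CompleteSpace X] [MeasurableSpace X]
    [BorelSpace X] {μ : Measure X} {Cd : ℝ≥0} {CP : ℝ} (hd : IsDoublingWith μ Cd)
    (hP : SupportsPoincare μ CP) {u v : X → ℝ} (hu : IsBV μ u) (hv : IsBV μ v)
    {E : Set X} (hE : MeasurableSet E) (hdens : ∀ x ∈ E, DensityOneAt μ E x)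
    (heq : ∀ x ∈ E, u x = v x) :
    totVarSet μ (fun y => u y - v y) E = 0 ∧
      ∀ A : Set X, A ⊆ E → totVarSet μ u A = totVarSet μ v A := by
  refine ⟨le_zero_iff.1 ?_, fun A hA => le_antisymm ?_ ?_⟩
  · exact (totVarSet_le_upperTotVarSet _ E).trans_eq
      (hu.upperTotVarSet_sub_eq_zero hv hd hP hE hdens heq)
  · exact hu.totVarSet_le_of_eqOn hv hd hP hE hdens heq hA
  · exact hv.totVarSet_le_of_eqOn hu hd hP hE hdens (fun x hx => (heq x hx).symm) hA

theorem statement4 {X : Type u} [MetricSpace X] [MeasurableSpace X] [BorelSpace X]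
    (μ : Measure X) (Cd : ℝ≥0) (CP : ℝ) (hCd : 1 ≤ Cd) (hCP : 0 < CP)
    (hX : GoodSpace X μ Cd CP)
    (u v : X → ℝ) (hu : IsBV μ u) (hv : IsBV μ v)
    (E : Set X) (hE : MeasurableSet E)
    (hdens : ∀ x ∈ E, DensityOneAt μ E x)
    (heq : ∀ x ∈ E, u x = v x) :
    totVarSet μ (fun y => u y - v y) E = 0 ∧
      ∀ A : Set X, A ⊆ E → totVarSet μ u A = totVarSet μ v A := by
  have := hX.2.1
  exact statement4_general hX.2.2.2.1 hX.2.2.2.2 hu hv hE hdens heq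

end
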